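/- arXiv:2102.04041 — 3 statements merged into one kernel-verified Lean document; each statement's English description precedes it below -/
import Mathlib

section
/- Let r ≥ 2 be an even integer and let n ≥ 7r. If G is a θ_{r+1}-free graph on n vertices, then ρ(G) ≤ ρ(T_{n,2}), with equality if and only if G is isomorphic to the Turán graph T_{n,2}. -/
open SimpleGraph Finset

attribute [local instance] Classical.propDecidable

/-- The spectral radius (largest adjacency eigenvalue) of a graph on `Fin n`. -/
noncomputable def adjSpectralRadius {n : ℕ} (G : SimpleGraph (Fin n)) : ℝ :=
  sSup (spectrum ℝ (G.adjMatrix ℝ))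

/-- `G` contains a copy of `H` (a subgraph isomorphic to `H`). -/
def Contains {α β : Type*} (G : SimpleGraph α) (H : SimpleGraph β) : Prop :=
  ∃ f : β ↪ α, ∀ a b, H.Adj a b → G.Adj (f a) (f b)

/-- The book `B_s`: `s` triangles sharing a common edge, i.e. `K_{2,s}` plus the
edge inside the part of size two. -/
def book (s : ℕ) : SimpleGraph (Fin 2 ⊕ Fin s) :=
  SimpleGraph.fromRel (fun x _ => x.isLeft = true)

/-- The theta graph `θ_{r+1} = θ(1,2,r+1)`: vertices `0,…,r+1` form a path of length
`r+1`, the edge `0 ~ (r+1)`, and vertex `r+2` is adjacent to `0` and `r+1`. -/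
def theta (r : ℕ) : SimpleGraph (Fin (r + 3)) :=
  SimpleGraph.fromRel (fun x y =>
    (x.val + 1 = y.val ∧ y.val ≤ r + 1) ∨
    (x.val = 0 ∧ y.val = r + 1) ∨
    (x.val = r + 2 ∧ (y.val = 0 ∨ y.val = r + 1)))

/-- The number of edges of a graph. -/
noncomputable def edgeCount {V : Type*} (G : SimpleGraph V) : ℕ := G.edgeSet.ncard

/-- The number of ordered pairs `(a,b) ∈ s × t` with `a ~ b`.  For disjoint `s` and `t`
this is the number `e(s,t)` of edges between `s` and `t`; for `s = t` it is `2·e(s)`. -/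
noncomputable def ordPairs {V : Type*} (G : SimpleGraph V) (s t : Finset V) : ℕ :=
  ((s ×ˢ t).filter fun p => G.Adj p.1 p.2).card

/-- The number of edges inside a vertex subset `s`. -/
noncomputable def edgesIn {V : Type*} (G : SimpleGraph V) (s : Finset V) : ℕ :=
  (G.induce (s : Set V)).edgeSet.ncard

/-!
Let `x` be an eigenvector for an eigenvalue `μ` of `G`, and let `u` maximise `|x u|`. Then `μ²` is
at most the number of walks of length two from `u`, which is `2e(A) + e(A, Aᶜ)` with `A = N(u)`.
If `A` is independent this is at most `|A||Aᶜ| ≤ ⌊n²/4⌋`.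

Otherwise it is smaller than `⌊n²/4⌋`. A path on `r + 2` vertices in `A` would form a `θ_{r+1}`
with `u`, so `e(A)` is linear in the number of non-isolated vertices of `G[A]` by the Erdős–Gallai
theorem. Among these vertices let `a` have the most neighbours in `Aᶜ`, and let `b ∈ A` be adjacent
to `a`. If `a` has few neighbours in `Aᶜ`, the edges missing between the non-isolated vertices and
`Aᶜ` outweigh those inside `A`. If it has many, then `e(A, N(a) \ A)` is small, because for even `r`
a long path alternating between `N(a) \ A` and `A` would form a `θ_{r+1}` with the triangle `uab`.

If `μ² = ⌊n²/4⌋`, then `A` is independent and completely joined to `Aᶜ`, so `|x|` is also maximal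
on `Aᶜ`. The vertices of `Aᶜ` then have independent neighbourhoods as well, so `Aᶜ` is independent.
-/

section EdgeCounts

variable {V : Type*} (G : SimpleGraph V)

lemma card_interedges_comm (S T : Finset V) :
    #(G.interedges S T) = #(G.interedges T S) :=
  have := G.symm
  Rel.card_interedges_comm S T

lemma card_interedges_sdiff_add_left {P S : Finset V} (hP : P ⊆ S) (T : Finset V) :
    #(G.interedges (S \ P) T) + #(G.interedges P T) = #(G.interedges S T) := by
  simp only [interedges_def, card_filter, sum_product, sum_sdiff hP]

lemma card_interedges_sdiff_add_right (S : Finset V) {P T : Finset V} (hP : P ⊆ T) :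
    #(G.interedges S (T \ P)) + #(G.interedges S P) = #(G.interedges S T) := by
  simp only [card_interedges_comm G S, card_interedges_sdiff_add_left G hP]

variable [Fintype V]

lemma card_interedges_eq_sum (S T : Finset V) :
    #(G.interedges S T) = ∑ v ∈ S, #(G.neighborFinset v ∩ T) := by
  rw [interedges_def, card_filter, sum_product]
  refine sum_congr rfl fun v _ => ?_
  rw [← card_filter]
  congr 1
  ext w
  simp only [mem_filter, mem_inter, mem_neighborFinset, and_comm]

variable {G}

lemma card_interedges_le_card_mul {S T : Finset V} {m : ℕ}
    (h : ∀ v ∈ S, #(G.neighborFinset v ∩ T) ≤ m) : #(G.interedges S T) ≤ #S * m := by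
  simpa only [card_interedges_eq_sum, smul_eq_mul] using sum_le_card_nsmul S _ m h

lemma card_neighborFinset_inter_lt {v : V} {S : Finset V} (hv : v ∈ S) :
    #(G.neighborFinset v ∩ S) < #S :=
  card_lt_card ⟨inter_subset_right, fun h => by simpa using h hv⟩

end EdgeCounts

section Paths

variable {V : Type*} {G : SimpleGraph V} {S : Finset V} {L : List V}

/-- The vertices of `L`, in this order, form a path of `G` inside `S`. Paths are lists of vertices
rather than walks because the arguments below rotate cycles and reverse segments of paths, which
are rearrangements of lists. -/
structure IsPathIn (G : SimpleGraph V) (S : Finset V) (L : List V) : Prop where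
  chain : L.IsChain G.Adj
  nodup : L.Nodup
  subset : ∀ v ∈ L, v ∈ S

namespace IsPathIn

lemma mono {T : Finset V} (hL : IsPathIn G S L) (hST : S ⊆ T) : IsPathIn G T L :=
  ⟨hL.chain, hL.nodup, fun v hv => hST (hL.subset v hv)⟩

lemma reverse (hL : IsPathIn G S L) : IsPathIn G S L.reverse :=
  ⟨List.isChain_reverse.2 (hL.chain.imp fun _ _ h => h.symm), List.nodup_reverse.2 hL.nodup,
    fun v hv => hL.subset v (List.mem_reverse.1 hv)⟩

lemma cons {v : V} (hL : IsPathIn G S L) (hvS : v ∈ S) (hvL : v ∉ L)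
    (hadj : ∀ w ∈ L.head?, G.Adj v w) : IsPathIn G S (v :: L) :=
  ⟨hL.chain.cons hadj, List.nodup_cons.2 ⟨hvL, hL.nodup⟩, List.forall_mem_cons.2 ⟨hvS, hL.subset⟩⟩

lemma take (hL : IsPathIn G S L) (m : ℕ) : IsPathIn G S (L.take m) :=
  ⟨hL.chain.take m, hL.nodup.sublist (L.take_sublist m),
    fun v hv => hL.subset v (List.mem_of_mem_take hv)⟩

lemma length_le (hL : IsPathIn G S L) : L.length ≤ #S := by
  rw [← List.toFinset_card_of_nodup hL.nodup]
  exact card_le_card fun v hv => hL.subset v (List.mem_toFinset.1 hv)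

lemma singleton {v : V} (hv : v ∈ S) : IsPathIn G S [v] :=
  ⟨.singleton v, List.nodup_singleton v, fun _ hw => List.mem_singleton.1 hw ▸ hv⟩

end IsPathIn

lemma exists_longest_isPathIn (G : SimpleGraph V) (S : Finset V) :
    ∃ L, IsPathIn G S L ∧ ∀ L', IsPathIn G S L' → L'.length ≤ L.length := by
  let lengths : Set ℕ := {m | ∃ L, IsPathIn G S L ∧ L.length = m}
  have bdd : BddAbove lengths := ⟨#S, by rintro _ ⟨L, hL, rfl⟩; exact hL.length_le⟩
  have nonempty : lengths.Nonempty := ⟨0, [], ⟨.nil, .nil, by simp⟩, rfl⟩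
  obtain ⟨L, hL, hmax⟩ := Nat.sSup_mem nonempty bdd
  exact ⟨L, hL, fun L' hL' => hmax ▸ le_csSup bdd ⟨L', hL', rfl⟩⟩

lemma IsPathIn.mem_tail_of_adj_head {a v : V} {t : List V} (hL : IsPathIn G S (a :: t))
    (hmax : ∀ L', IsPathIn G S L' → L'.length ≤ (a :: t).length) (hv : v ∈ S)
    (hav : G.Adj a v) : v ∈ t := by
  by_contra hvt
  have longer := hL.cons hv (by simp [hvt, hav.ne']) (by simpa using hav.symm)
  simpa using hmax _ longer

lemma IsPathIn.mem_dropLast_of_adj_getLast {b v : V} {s : List V} (hL : IsPathIn G S (s ++ [b]))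
    (hmax : ∀ L', IsPathIn G S L' → L'.length ≤ (s ++ [b]).length) (hv : v ∈ S)
    (hbv : G.Adj b v) : v ∈ s := by
  have hrev : IsPathIn G S (b :: s.reverse) := by simpa using hL.reverse
  simpa using hrev.mem_tail_of_adj_head (by simpa using hmax) hv hbv

end Paths

section ErdosGallai

variable {V : Type*} {G : SimpleGraph V} {S : Finset V}

lemma card_neighborFinset_inter_le_card_indices [Fintype V] {v : V} {l : List V}
    (h : ∀ w ∈ S, G.Adj v w → w ∈ l) :
    #(G.neighborFinset v ∩ S) ≤ #{i ∈ range l.length | ∃ w ∈ l[i]?, G.Adj v w} := by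
  have hl : ∀ w ∈ G.neighborFinset v ∩ S, w ∈ l := fun w hw => by
    rw [mem_inter, mem_neighborFinset] at hw
    exact h w hw.2 hw.1
  refine card_le_card_of_injOn l.idxOf (fun w hw => ?_) fun w hw w' _ heq =>
    (List.idxOf_inj (hl w hw)).1 heq
  have hwl := hl w hw
  rw [mem_coe, mem_inter, mem_neighborFinset] at hw
  simp only [coe_filter, Finset.mem_range, Set.mem_ofPred_eq]
  exact ⟨List.idxOf_lt_length_of_mem hwl, w, List.getElem?_idxOf hwl, hw.1⟩

lemma exists_crossing_neighbors [Fintype V] {a b : V} {s t : List V} (hst : a :: t = s ++ [b])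
    (ha : ∀ v ∈ S, G.Adj a v → v ∈ t) (hb : ∀ v ∈ S, G.Adj b v → v ∈ s)
    (hdeg : t.length < #(G.neighborFinset a ∩ S) + #(G.neighborFinset b ∩ S)) :
    ∃ l₁ x y l₂, a :: t = l₁ ++ x :: y :: l₂ ∧ G.Adj a y ∧ G.Adj b x := by
  have hlen : t.length = s.length := by simpa using congrArg List.length hst
  obtain ⟨i, hi⟩ := inter_nonempty_of_card_lt_card_add_card (s := range t.length)
    (filter_subset (fun i => ∃ w ∈ t[i]?, G.Adj a w) _)
    (filter_subset (fun i => ∃ w ∈ s[i]?, G.Adj b w) _)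
    (by
      have hcount_a := card_neighborFinset_inter_le_card_indices ha
      have hcount_b := card_neighborFinset_inter_le_card_indices hb
      rw [← hlen] at hcount_b
      rw [card_range]
      omega)
  simp only [mem_inter, mem_filter, Finset.mem_range] at hi
  obtain ⟨⟨hit, y, hy, hay⟩, -, x, hx, hbx⟩ := hi
  obtain ⟨hit, rfl⟩ := List.getElem?_eq_some_iff.1 hy
  obtain ⟨his, rfl⟩ := List.getElem?_eq_some_iff.1 hx
  refine ⟨s.take i, s[i], t[i], t.drop (i + 1), ?_, hay, hbx⟩
  have hxL : s[i] = (a :: t)[i]'(by simp; omega) := by simp [hst, List.getElem_append_left his]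
  have htake : s.take i = (a :: t).take i := by simp [hst, List.take_append_of_le_length his.le]
  rw [hxL, htake, List.getElem_cons_drop, ← List.drop_succ_cons,
    List.getElem_cons_drop, List.take_append_drop]

lemma cycleChain_of_crossing {x y : V} {l₁ l₂ : List V}
    (hchain : (l₁ ++ x :: y :: l₂).IsChain G.Adj) (hy : ∀ a ∈ (l₁ ++ [x]).head?, G.Adj a y)
    (hx : ∀ b ∈ (y :: l₂).getLast?, G.Adj b x) :
    Cycle.Chain G.Adj (↑(x :: (l₁.reverse ++ y :: l₂)) : Cycle V) := by
  obtain ⟨hleft, hright⟩ : (l₁ ++ [x]).IsChain G.Adj ∧ (y :: l₂).IsChain G.Adj := by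
    rw [List.isChain_append_cons_cons] at hchain
    exact ⟨hchain.1, hchain.2.2⟩
  have hrev : (l₁ ++ [x]).reverse.IsChain G.Adj :=
    List.isChain_reverse.2 (hleft.imp fun _ _ h => h.symm)
  have hclosed : (((l₁ ++ [x]).reverse ++ y :: l₂) ++ [x]).IsChain G.Adj := by
    refine (hrev.append hright ?_).append (.singleton x) ?_
    · intro c hc d hd
      obtain rfl : y = d := by simpa using hd
      exact hy c (by rwa [List.getLast?_reverse] at hc)
    · intro c hc d hd
      obtain rfl : x = d := by simpa using hd
      exact hx c (by rwa [List.getLast?_append_of_ne_nil _ (List.cons_ne_nil y l₂)] at hc)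
  simpa [Cycle.chain_coe_cons] using hclosed

lemma mem_of_adj_of_cycleChain {C : List V} (hC : Cycle.Chain G.Adj (C : Cycle V))
    (hnodup : C.Nodup) (hsub : ∀ v ∈ C, v ∈ S)
    (hmax : ∀ L, IsPathIn G S L → L.length ≤ C.length) {v w : V} (hv : v ∈ C) (hw : w ∈ S)
    (hwv : G.Adj w v) : w ∈ C := by
  by_contra hwC
  obtain ⟨l₁, l₂, rfl⟩ := List.append_of_mem hv
  have hrot : ((l₁ ++ v :: l₂ : List V) : Cycle V) = ↑(v :: (l₂ ++ l₁)) :=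
    Cycle.coe_eq_coe.2 (by simpa using List.isRotated_append (l := l₁) (l' := v :: l₂))
  have hperm : (v :: (l₂ ++ l₁)).Perm (l₁ ++ v :: l₂) :=
    (Cycle.coe_eq_coe.1 hrot).perm.symm
  rw [hrot, Cycle.chain_coe_cons, ← List.cons_append] at hC
  have hpath : IsPathIn G S (v :: (l₂ ++ l₁)) :=
    ⟨hC.left_of_append, hperm.nodup_iff.2 hnodup, fun z hz => hsub z (hperm.mem_iff.1 hz)⟩
  have longer := hmax _ (hpath.cons hw (fun h => hwC (hperm.mem_iff.1 h)) (by simpa using hwv))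
  rw [List.length_cons, hperm.length_eq] at longer
  exact absurd longer (Nat.not_succ_le_self _)

lemma exists_perm_cycleChain [Fintype V] {a b : V} {s t : List V} (hst : a :: t = s ++ [b])
    (hchain : (a :: t).IsChain G.Adj) (ha : ∀ v ∈ S, G.Adj a v → v ∈ t)
    (hb : ∀ v ∈ S, G.Adj b v → v ∈ s)
    (hdeg : t.length < #(G.neighborFinset a ∩ S) + #(G.neighborFinset b ∩ S)) :
    ∃ C : List V, C.Perm (a :: t) ∧ Cycle.Chain G.Adj (C : Cycle V) := by
  obtain ⟨l₁, x, y, l₂, hL, hay, hbx⟩ := exists_crossing_neighbors hst ha hb hdeg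
  have hhead : (l₁ ++ [x]).head? = some a := by
    simpa [List.head?_append] using congrArg List.head? hL.symm
  have hlast : (y :: l₂).getLast? = some b := by
    simpa [List.getLast?_append] using congrArg List.getLast? (hL.symm.trans hst)
  refine ⟨x :: (l₁.reverse ++ y :: l₂), ?_, cycleChain_of_crossing (hL ▸ hchain)
    (by simpa [hhead] using hay) (by simpa [hlast] using hbx)⟩
  rw [hL]
  exact ((l₁.reverse_perm.append_right _).cons x).trans List.perm_middle.symm

-- The neighbours of the two ends of a longest path overlap after a shift by one, which closes the
-- path up into a cycle; by maximality no edge leaves this cycle.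
lemma exists_subset_closed_of_lt_degree [Fintype V] {k : ℕ} (hS : S.Nonempty)
    (hlen : ∀ L, IsPathIn G S L → L.length ≤ k + 1)
    (hdeg : ∀ v ∈ S, k < 2 * #(G.neighborFinset v ∩ S)) :
    ∃ P ⊆ S, P.Nonempty ∧ #P ≤ k + 1 ∧ ∀ v ∈ P, ∀ w ∈ S, G.Adj w v → w ∈ P := by
  obtain ⟨L, hL, hmax⟩ := exists_longest_isPathIn G S
  obtain ⟨z, hz⟩ := hS
  have hL₀ : L ≠ [] := fun h => by simpa [h] using hmax _ (.singleton hz)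
  obtain ⟨a, t, rfl⟩ := List.exists_cons_of_ne_nil hL₀
  obtain ⟨s, b, hst⟩ : ∃ s b, a :: t = s ++ [b] :=
    ⟨_, _, (List.dropLast_append_getLast hL₀).symm⟩
  have hshort : t.length < #(G.neighborFinset a ∩ S) + #(G.neighborFinset b ∩ S) := by
    have hda := hdeg a (hL.subset a List.mem_cons_self)
    have hdb := hdeg b (hL.subset b (by simp [hst]))
    have ht := hlen _ hL
    rw [List.length_cons] at ht
    omega
  obtain ⟨C, hperm, hC⟩ := exists_perm_cycleChain hst hL.chain
    (fun v hv => hL.mem_tail_of_adj_head hmax hv)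
    (fun v hv => (hst ▸ hL).mem_dropLast_of_adj_getLast (hst ▸ hmax) hv) hshort
  refine ⟨C.toFinset, fun v hv => hL.subset v (by simpa [hperm.mem_iff] using hv),
    ⟨a, by simp [hperm.mem_iff]⟩, ?_, fun v hv w hw hwv => ?_⟩
  · rw [List.toFinset_card_of_nodup (hperm.nodup_iff.2 hL.nodup), hperm.length_eq]
    exact hlen _ hL
  · rw [List.mem_toFinset] at hv ⊢
    exact mem_of_adj_of_cycleChain hC (hperm.nodup_iff.2 hL.nodup)
      (fun z hz => hL.subset z (hperm.mem_iff.1 hz)) (fun L' hL' => hperm.length_eq ▸ hmax L' hL')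
      hv hw hwv

lemma exists_removable_subset [Finite V] {k : ℕ} (hS : S.Nonempty)
    (hlen : ∀ L, IsPathIn G S L → L.length ≤ k + 1) :
    ∃ P ⊆ S, P.Nonempty ∧
      #(G.interedges (S \ P) P) + #(G.interedges P S) ≤ k * #P := by
  cases nonempty_fintype V
  by_cases! hdeg : ∀ v ∈ S, k < 2 * #(G.neighborFinset v ∩ S)
  · obtain ⟨P, hPS, hP, hcard, hclosed⟩ := exists_subset_closed_of_lt_degree hS hlen hdeg
    refine ⟨P, hPS, hP, ?_⟩
    have hout : #(G.interedges (S \ P) P) = 0 := by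
      refine card_eq_zero.2 (eq_empty_of_forall_notMem fun ⟨w, v⟩ h => ?_)
      obtain ⟨hw, hv, hwv⟩ := G.mk_mem_interedges_iff.1 h
      exact (mem_sdiff.1 hw).2 (hclosed v hv w (mem_sdiff.1 hw).1 hwv)
    have hin : #(G.interedges P S) ≤ #P * k := card_interedges_le_card_mul fun v hv => by
      have hsub : G.neighborFinset v ∩ S ⊆ G.neighborFinset v ∩ P := fun w hw => by
        rw [mem_inter, mem_neighborFinset] at hw ⊢
        exact ⟨hw.1, hclosed v hv w hw.2 hw.1.symm⟩
      have := card_le_card hsub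
      have := card_neighborFinset_inter_lt (G := G) hv
      omega
    rw [hout, zero_add, mul_comm]
    exact hin
  · obtain ⟨v, hv, hdeg⟩ := hdeg
    have hfrom : #(G.interedges {v} S) = #(G.neighborFinset v ∩ S) := by
      rw [card_interedges_eq_sum, sum_singleton]
    have hto : #(G.interedges (S \ {v}) {v}) ≤ #(G.interedges {v} S) := by
      rw [card_interedges_comm]
      exact card_le_card (G.interedges_mono subset_rfl sdiff_subset)
    refine ⟨{v}, singleton_subset_iff.2 hv, singleton_nonempty v, ?_⟩
    rw [card_singleton]
    omega

theorem erdos_gallai [Finite V] {k : ℕ} (hlen : ∀ L, IsPathIn G S L → L.length ≤ k + 1) :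
    #(G.interedges S S) ≤ k * #S := by
  induction S using Finset.strongInduction with
  | H S ih =>
    obtain rfl | hS := S.eq_empty_or_nonempty
    · simp
    obtain ⟨P, hPS, hP, hremoved⟩ := exists_removable_subset hS hlen
    have hrest : #(G.interedges (S \ P) (S \ P)) ≤ k * #(S \ P) :=
      ih _ (sdiff_ssubset hPS hP) fun L hL => hlen L (hL.mono sdiff_subset)
    calc #(G.interedges S S)
        = #(G.interedges (S \ P) (S \ P)) +
            (#(G.interedges (S \ P) P) + #(G.interedges P S)) := by
          rw [← card_interedges_sdiff_add_left G hPS S,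
            ← card_interedges_sdiff_add_right G (S \ P) hPS, add_assoc]
      _ ≤ k * #(S \ P) + k * #P := add_le_add hrest hremoved
      _ = k * #S := by rw [← mul_add, card_sdiff_add_card_eq_card hPS]

end ErdosGallai

section AlternatingPaths

variable {V : Type*} {G : SimpleGraph V} {X Y : Finset V} {k : ℕ}

-- Deleting a vertex with at most `k` neighbours on the other side preserves the hypothesis.
lemma exists_subsets_lt_degree [Fintype V] (h : k * (#X + #Y) < #(G.interedges X Y)) :
    ∃ X' ⊆ X, ∃ Y' ⊆ Y, X'.Nonempty ∧ (∀ x ∈ X', k < #(G.neighborFinset x ∩ Y')) ∧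
      ∀ y ∈ Y', k < #(G.neighborFinset y ∩ X') := by
  induction hm : #X + #Y using Nat.strong_induction_on generalizing X Y with
  | _ m ih =>
    have hX : X.Nonempty := by
      rw [nonempty_iff_ne_empty]
      rintro rfl
      simp at h
    by_cases! hx : ∃ x ∈ X, #(G.neighborFinset x ∩ Y) ≤ k
    · obtain ⟨x, hxX, hx⟩ := hx
      have hcard := card_erase_add_one hxX
      have hsplit := card_interedges_sdiff_add_left G (singleton_subset_iff.2 hxX) Y
      rw [card_interedges_eq_sum G {x}, sum_singleton, sdiff_singleton_eq_erase] at hsplit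
      obtain ⟨X', hX', Y', hY', hdeg⟩ := ih (#(X.erase x) + #Y) (by omega)
        (by rw [← hcard, add_right_comm, mul_add_one] at h; omega) rfl
      exact ⟨X', hX'.trans (erase_subset x X), Y', hY', hdeg⟩
    by_cases! hy : ∃ y ∈ Y, #(G.neighborFinset y ∩ X) ≤ k
    · obtain ⟨y, hyY, hy⟩ := hy
      have hcard := card_erase_add_one hyY
      have hsplit := card_interedges_sdiff_add_right G X (singleton_subset_iff.2 hyY)
      rw [card_interedges_comm G X {y}, card_interedges_eq_sum G {y}, sum_singleton,
        sdiff_singleton_eq_erase] at hsplit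
      obtain ⟨X', hX', Y', hY', hdeg⟩ := ih (#X + #(Y.erase y)) (by omega)
        (by rw [← hcard, ← add_assoc, mul_add_one] at h; omega) rfl
      exact ⟨X', hX', Y', hY'.trans (erase_subset y Y), hdeg⟩
    exact ⟨X, subset_rfl, Y, subset_rfl, hX, hx, hy⟩

lemma exists_alternating_path [Fintype V] (hXY : Disjoint X Y)
    (hX : ∀ x ∈ X, k < #(G.neighborFinset x ∩ Y)) (hY : ∀ y ∈ Y, k < #(G.neighborFinset y ∩ X))
    {x : V} (hx : x ∈ X) :
    ∃ t, ∃ y ∈ Y, t.length = 2 * k ∧ IsPathIn G (X ∪ Y) (x :: (t ++ [y])) := by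
  induction k generalizing X Y x with
  | zero =>
    obtain ⟨y, hy⟩ := card_pos.1 (hX x hx)
    rw [mem_inter, mem_neighborFinset] at hy
    exact ⟨[], y, hy.2, rfl, (IsPathIn.singleton (mem_union_right X hy.2)).cons
      (mem_union_left Y hx) (by simpa using hy.1.ne) (by simpa using hy.1)⟩
  | succ k ih =>
    obtain ⟨y₁, hy₁⟩ := card_pos.1 ((Nat.zero_le _).trans_lt (hX x hx))
    rw [mem_inter, mem_neighborFinset] at hy₁
    have hcardX := hY y₁ hy₁.2
    obtain ⟨x₁, hx₁, hne⟩ := exists_mem_ne ((Nat.le_add_left 1 k).trans_lt hcardX) x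
    rw [mem_inter, mem_neighborFinset] at hx₁
    have hdeg_erase {v z : V} {Z : Finset V} (h : k + 1 < #(G.neighborFinset v ∩ Z)) :
        k < #(G.neighborFinset v ∩ Z.erase z) := by
      have := pred_card_le_card_erase (s := G.neighborFinset v ∩ Z) (a := z)
      rw [inter_erase]
      omega
    obtain ⟨t, y, hy, ht, hpath⟩ := ih (X := X.erase x) (Y := Y.erase y₁)
      (hXY.mono (erase_subset x X) (erase_subset y₁ Y))
      (fun v hv => hdeg_erase (hX v (mem_of_mem_erase hv)))
      (fun v hv => hdeg_erase (hY v (mem_of_mem_erase hv))) (mem_erase.2 ⟨hne, hx₁.2⟩)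
    have hx_notMem_Y : x ∉ Y := disjoint_left.1 hXY hx
    have hy₁_notMem_X : y₁ ∉ X := disjoint_right.1 hXY hy₁.2
    have hx_new : x ∉ x₁ :: (t ++ [y]) := fun h => by
      simpa [hx_notMem_Y] using hpath.subset x h
    have hy₁_new : y₁ ∉ x₁ :: (t ++ [y]) := fun h => by
      simpa [hy₁_notMem_X] using hpath.subset y₁ h
    refine ⟨y₁ :: x₁ :: t, y, mem_of_mem_erase hy, by simp [ht]; omega, ?_⟩
    refine ((hpath.mono (union_subset_union (erase_subset x X) (erase_subset y₁ Y))).cons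
      (mem_union_right X hy₁.2) hy₁_new (by simpa using hx₁.1)).cons (mem_union_left Y hx) ?_
      (by simpa using hy₁.1)
    exact List.not_mem_cons_of_ne_of_not_mem hy₁.1.ne hx_new

lemma card_interedges_le_of_forall_not_isPathIn [Finite V] (hXY : Disjoint X Y)
    (hpath : ∀ t, ∀ x ∈ X, ∀ y ∈ Y, t.length = 2 * k → ¬ IsPathIn G (X ∪ Y) (x :: (t ++ [y]))) :
    #(G.interedges X Y) ≤ k * (#X + #Y) := by
  cases nonempty_fintype V
  by_contra! h
  obtain ⟨X', hX', Y', hY', ⟨x, hx⟩, hdegX, hdegY⟩ := exists_subsets_lt_degree h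
  obtain ⟨t, y, hy, ht, hL⟩ := exists_alternating_path (hXY.mono hX' hY') hdegX hdegY hx
  exact hpath t x (hX' hx) y (hY' hy) ht (hL.mono (union_subset_union hX' hY'))

end AlternatingPaths

section Theta

variable {V : Type*} {G : SimpleGraph V}

lemma contains_theta {r : ℕ} {a b w : V} {t : List V} (ht : t.length = r)
    (hnodup : (a :: (t ++ [b]) ++ [w]).Nodup) (hchain : (a :: (t ++ [b])).IsChain G.Adj)
    (hab : G.Adj a b) (hwa : G.Adj w a) (hwb : G.Adj w b) : Contains G (theta r) := by
  have hlen : (a :: (t ++ [b]) ++ [w]).length = r + 3 := by simp [ht]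
  let f : Fin (r + 3) → V := fun i => (a :: (t ++ [b]) ++ [w])[i]'(hlen.symm ▸ i.isLt)
  have hf_inj : Function.Injective f := fun i j hij =>
    Fin.ext ((hnodup.getElem_inj_iff).1 hij)
  have hf_lt (i : Fin (r + 3)) (hi : (i : ℕ) < (a :: (t ++ [b])).length) :
      f i = (a :: (t ++ [b]))[i] := List.getElem_append_left hi
  have hf_path (i j : Fin (r + 3)) (hij : (i : ℕ) + 1 = j) (hj : (j : ℕ) ≤ r + 1) :
      G.Adj (f i) (f j) := by
    have hj' : (i : ℕ) + 1 < (a :: (t ++ [b])).length := by simp [ht]; omega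
    rw [hf_lt i (by omega), hf_lt j (by omega)]
    simpa [hij] using List.isChain_iff_getElem.1 hchain i hj'
  have hf_first (i : Fin (r + 3)) (hi : (i : ℕ) = 0) : f i = a := by simp [f, hi]
  have hf_last (i : Fin (r + 3)) (hi : (i : ℕ) = r + 1) : f i = b := by simp [f, hi, ht]
  have hf_apex (i : Fin (r + 3)) (hi : (i : ℕ) = r + 2) : f i = w := by simp [f, hi, ht]
  have hf_adj (i j : Fin (r + 3)) (hij : ((i : ℕ) + 1 = j ∧ (j : ℕ) ≤ r + 1) ∨
      ((i : ℕ) = 0 ∧ (j : ℕ) = r + 1) ∨ ((i : ℕ) = r + 2 ∧ ((j : ℕ) = 0 ∨ (j : ℕ) = r + 1))) :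
      G.Adj (f i) (f j) := by
    rcases hij with ⟨hij, hj⟩ | ⟨hi, hj⟩ | ⟨hi, hj | hj⟩
    · exact hf_path i j hij hj
    · rwa [hf_first i hi, hf_last j hj]
    · rwa [hf_apex i hi, hf_first j hj]
    · rwa [hf_apex i hi, hf_last j hj]
  refine ⟨⟨f, hf_inj⟩, fun i j hij => ?_⟩
  obtain ⟨-, hij | hji⟩ := (SimpleGraph.fromRel_adj _ _ _).1 hij
  · exact hf_adj i j hij
  · exact (hf_adj j i hji).symm

variable [Fintype V]

lemma length_le_of_isPathIn_neighborFinset {r : ℕ} (hfree : ¬ Contains G (theta r)) {u : V}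
    {L : List V} (hL : IsPathIn G (G.neighborFinset u) L) : L.length ≤ r + 1 := by
  by_contra! hlong
  have hlen : (L.take (r + 2)).length = r + 2 := List.length_take_of_le hlong
  obtain ⟨w, a, t, hwat⟩ : ∃ w a t, L.take (r + 2) = w :: a :: t := by
    rcases h : L.take (r + 2) with _ | ⟨w, _ | ⟨a, t⟩⟩ <;> simp_all
  have hpath := hL.take (r + 2)
  rw [hwat] at hlen hpath
  have hadj_u : ∀ v ∈ w :: a :: t, G.Adj u v := fun v hv =>
    (G.mem_neighborFinset u v).1 (hpath.subset v hv)
  have hnodup_u : (u :: w :: a :: t).Nodup :=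
    List.nodup_cons.2 ⟨fun h => (hadj_u u h).ne rfl, hpath.nodup⟩
  have hperm : (a :: (t ++ [u]) ++ [w]).Perm (u :: w :: a :: t) := by
    simpa using (List.perm_append_comm (l₁ := a :: t) (l₂ := [u, w]))
  have hchain_u : ((a :: t) ++ [u]).IsChain G.Adj := by
    refine hpath.chain.tail.append (.singleton u) fun v hv z hz => ?_
    obtain rfl : u = z := by simpa using hz
    exact (hadj_u v (List.mem_cons_of_mem w (List.mem_of_mem_getLast? hv))).symm
  refine hfree (contains_theta (by simpa using hlen) (hperm.nodup_iff.2 hnodup_u) hchain_u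
    (hadj_u a (by simp)).symm ?_ (hadj_u w (by simp)).symm)
  exact (List.isChain_cons_cons.1 hpath.chain).1

lemma card_interedges_le_of_theta_free {k : ℕ} (hfree : ¬ Contains G (theta (2 * (k + 1))))
    {u a b : V} {X Y : Finset V} (hua : G.Adj u a) (hub : G.Adj u b) (hab : G.Adj a b)
    (hX : X ⊆ G.neighborFinset a \ {u, b}) (hY : Y ⊆ G.neighborFinset u \ {a, b})
    (hXY : Disjoint X Y) : #(G.interedges X Y) ≤ k * (#X + #Y) := by
  simp only [subset_iff, mem_sdiff, mem_neighborFinset, mem_insert, mem_singleton, not_or]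
    at hX hY
  refine card_interedges_le_of_forall_not_isPathIn hXY fun t x hx y hy ht hpath => hfree ?_
  have hne : ∀ v ∈ x :: (t ++ [y]), v ≠ u ∧ v ≠ a ∧ v ≠ b := fun v hv => by
    rcases mem_union.1 (hpath.subset v hv) with hv | hv
    · exact ⟨(hX hv).2.1, (hX hv).1.ne', (hX hv).2.2⟩
    · exact ⟨(hY hv).1.ne', (hY hv).2⟩
  have hnodup : (u :: a :: b :: x :: (t ++ [y])).Nodup := by
    simp only [List.nodup_cons (a := u), List.nodup_cons (a := a), List.nodup_cons (a := b)]
    refine ⟨?_, ?_, fun h => (hne b h).2.2 rfl, hpath.nodup⟩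
    · rw [List.mem_cons, List.mem_cons, not_or, not_or]
      exact ⟨hua.ne, hub.ne, fun h => (hne u h).1 rfl⟩
    · rw [List.mem_cons, not_or]
      exact ⟨hab.ne, fun h => (hne a h).2.1 rfl⟩
  have hchain : (a :: (x :: (t ++ [y]) ++ [u])).IsChain G.Adj := by
    refine List.isChain_cons_cons.2
      ⟨(hX hx).1, hpath.chain.append (.singleton u) fun v hv z hz => ?_⟩
    obtain rfl : u = z := by simpa using hz
    obtain rfl : y = v := by
      rw [← List.cons_append, List.getLast?_concat] at hv
      exact Option.some.inj hv
    exact (hY hy).1.symm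
  have hperm : (a :: (x :: (t ++ [y]) ++ [u]) ++ [b]).Perm (u :: a :: b :: x :: (t ++ [y])) := by
    refine List.Perm.trans ?_ ((List.Perm.swap a b _).cons u)
    simpa using List.perm_append_comm (l₁ := a :: x :: (t ++ [y])) (l₂ := [u, b])
  exact contains_theta (by simp [ht]; omega) (hperm.nodup_iff.2 hnodup) hchain hua.symm hab.symm
    hub.symm

end Theta

section TwoWalks

lemma lt_sq_div_four_of_four_mul_add_one_lt {F n : ℕ} (h : 4 * F + 1 < n ^ 2) :
    F < n ^ 2 / 4 := by
  obtain ⟨m, rfl | rfl⟩ := n.even_or_odd'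
  all_goals ring_nf at h ⊢; omega

lemma mul_le_sq_add_div_four (a b : ℕ) : a * b ≤ (a + b) ^ 2 / 4 := by
  rw [Nat.le_div_iff_mul_le (by norm_num), mul_comm, ← mul_assoc]
  exact four_mul_le_sq_add a b

lemma four_mul_add_one_lt_sq {K n a N c F : ℤ} (hK : 1 ≤ K) (hn : 14 * K ≤ n) (hN : 0 ≤ N)
    (hc : 1 ≤ c) (hsum : a + N + c = n) (h₁ : F ≤ a * (N + 1 + 2 * K))
    (h₂ : F ≤ 2 * K * a + (2 * (N + 1) + (K - 1) * (N + (a - 2)) + (a - 2) * c)) :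
    4 * F + 1 < n ^ 2 := by
  have hnn : 0 ≤ (n - 14 * K) * n := mul_nonneg (by linarith) (by linarith)
  obtain rfl | hc : c = 1 ∨ 2 ≤ c := by omega
  · have haK : 0 ≤ (n - 1 - a) * (2 * K - 1) := mul_nonneg (by linarith) (by linarith)
    have hF : F ≤ 3 * K * n - 5 * K + 2 := by
      obtain rfl : N = n - a - 1 := by linarith
      linarith
    have hKn : 0 ≤ K * (n - 14) := mul_nonneg (by linarith) (by linarith)
    linarith
  · have hKc : 0 ≤ (K + 3) * (c - 2) := mul_nonneg (by linarith) (by linarith)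
    -- `c` is eliminated by adding `h₁` and `h₂`; what is left is a parabola in `a`.
    have hF : 2 * F ≤ a * (n + 4 * K - 1 - a) + (K + 1) * n - 4 * K - 2 := by
      obtain rfl : N = n - a - c := by linarith
      linarith
    have hparabola : 4 * (a * (n + 4 * K - 1 - a)) ≤ (n + 4 * K - 1) ^ 2 := by
      linarith [sq_nonneg (2 * a - (n + 4 * K - 1))]
    have hKn : 0 ≤ (n - 14 * K) * (K - 1) := mul_nonneg (by linarith) (by linarith)
    nlinarith [sq_nonneg (K - 1)]

variable {V : Type*}

/-- The vertices of `S` that are not isolated in the subgraph of `G` induced on `S`. -/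
noncomputable def nonisolated (G : SimpleGraph V) (S : Finset V) : Finset V :=
  {v ∈ S | ∃ w ∈ S, G.Adj v w}

variable {G : SimpleGraph V}

lemma nonisolated_subset (S : Finset V) : nonisolated G S ⊆ S := filter_subset _ S

lemma interedges_nonisolated (S : Finset V) :
    G.interedges (nonisolated G S) (nonisolated G S) = G.interedges S S := by
  ext ⟨v, w⟩
  simp only [mk_mem_interedges_iff, nonisolated, mem_filter]
  exact ⟨fun ⟨hv, hw, h⟩ => ⟨hv.1, hw.1, h⟩,
    fun ⟨hv, hw, h⟩ => ⟨⟨hv, w, hw, h⟩, ⟨hw, v, hv, h.symm⟩, h⟩⟩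

variable [Fintype V]

/-- The number of walks of length two in `G` that start at `u`. -/
noncomputable def twoWalkCount (G : SimpleGraph V) (u : V) : ℕ :=
  ∑ v ∈ G.neighborFinset u, G.degree v

lemma twoWalkCount_eq (G : SimpleGraph V) (u : V) :
    twoWalkCount G u = #(G.interedges (G.neighborFinset u) (G.neighborFinset u)) +
      #(G.interedges (G.neighborFinset u) (G.neighborFinset u)ᶜ) := by
  rw [add_comm, compl_eq_univ_sdiff, card_interedges_sdiff_add_right G _ (subset_univ _),
    card_interedges_eq_sum]
  simp only [twoWalkCount, inter_univ, card_neighborFinset_eq_degree]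

lemma card_mul_card_compl_le (A : Finset V) : #A * #Aᶜ ≤ Fintype.card V ^ 2 / 4 := by
  simpa only [card_add_card_compl] using mul_le_sq_add_div_four #A #Aᶜ

lemma twoWalkCount_eq_of_isIndepSet {u : V} (h : G.IsIndepSet (G.neighborFinset u : Set V)) :
    twoWalkCount G u = #(G.interedges (G.neighborFinset u) (G.neighborFinset u)ᶜ) := by
  have hempty : G.interedges (G.neighborFinset u) (G.neighborFinset u) = ∅ :=
    eq_empty_of_forall_notMem fun ⟨v, w⟩ hvw => by
      obtain ⟨hv, hw, hadj⟩ := G.mk_mem_interedges_iff.1 hvw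
      exact h hv hw hadj.ne hadj
  rw [twoWalkCount_eq, hempty, card_empty, zero_add]

lemma twoWalkCount_le_of_isIndepSet {u : V} (h : G.IsIndepSet (G.neighborFinset u : Set V)) :
    twoWalkCount G u ≤ Fintype.card V ^ 2 / 4 :=
  (twoWalkCount_eq_of_isIndepSet h).trans_le
    ((G.card_interedges_le_mul _ _).trans (card_mul_card_compl_le _))

lemma card_interedges_neighborFinset_le {r : ℕ} (hfree : ¬ Contains G (theta r)) (u : V) :
    #(G.interedges (G.neighborFinset u) (G.neighborFinset u)) ≤
      r * #(nonisolated G (G.neighborFinset u)) := by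
  rw [← interedges_nonisolated]
  exact erdos_gallai fun L hL =>
    length_le_of_isPathIn_neighborFinset hfree (hL.mono (nonisolated_subset _))

lemma twoWalkCount_le_of_nonisolated {r D : ℕ} (hfree : ¬ Contains G (theta r)) {u : V}
    (hD : ∀ v ∈ nonisolated G (G.neighborFinset u),
      #(G.neighborFinset v ∩ (G.neighborFinset u)ᶜ) ≤ D) :
    twoWalkCount G u ≤ #(nonisolated G (G.neighborFinset u)) * (D + r) +
      #(G.neighborFinset u \ nonisolated G (G.neighborFinset u)) * #(G.neighborFinset u)ᶜ := by
  have hinside := card_interedges_neighborFinset_le hfree u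
  have hP := card_interedges_le_card_mul hD
  have hrest := G.card_interedges_le_mul
    (G.neighborFinset u \ nonisolated G (G.neighborFinset u)) (G.neighborFinset u)ᶜ
  have hsplit := card_interedges_sdiff_add_left G (nonisolated_subset (G := G) (G.neighborFinset u))
    (G.neighborFinset u)ᶜ
  rw [twoWalkCount_eq, ← hsplit]
  linarith

lemma twoWalkCount_le_card_mul {r D : ℕ} (hfree : ¬ Contains G (theta r)) {u : V}
    (hD : ∀ v ∈ nonisolated G (G.neighborFinset u),
      #(G.neighborFinset v ∩ (G.neighborFinset u)ᶜ) ≤ D)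
    (hle : #(G.neighborFinset u)ᶜ ≤ D + r) :
    twoWalkCount G u ≤ #(G.neighborFinset u) * (D + r) := by
  rw [← card_sdiff_add_card_eq_card (nonisolated_subset (G := G) (G.neighborFinset u)), add_comm,
    add_mul]
  exact (twoWalkCount_le_of_nonisolated hfree hD).trans (by gcongr)

lemma twoWalkCount_lt_card_mul_card_compl {r D : ℕ} (hfree : ¬ Contains G (theta r)) {u : V}
    (hne : (nonisolated G (G.neighborFinset u)).Nonempty)
    (hD : ∀ v ∈ nonisolated G (G.neighborFinset u),
      #(G.neighborFinset v ∩ (G.neighborFinset u)ᶜ) ≤ D)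
    (hlt : D + r < #(G.neighborFinset u)ᶜ) :
    twoWalkCount G u < #(G.neighborFinset u) * #(G.neighborFinset u)ᶜ := by
  rw [← card_sdiff_add_card_eq_card (nonisolated_subset (G := G) (G.neighborFinset u)), add_comm,
    add_mul]
  exact (twoWalkCount_le_of_nonisolated hfree hD).trans_lt (by gcongr)

lemma card_interedges_compl_le_of_adj {k N c m : ℕ}
    (hfree : ¬ Contains G (theta (2 * (k + 1)))) {u a b : V} (hua : G.Adj u a) (hub : G.Adj u b)
    (hab : G.Adj a b)
    (hN : #(G.neighborFinset a ∩ (G.neighborFinset u)ᶜ) = N + 1)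
    (hb : #(G.neighborFinset b ∩ (G.neighborFinset u)ᶜ) ≤ N + 1)
    (hc : #(G.neighborFinset u)ᶜ = N + c) (hm : #(G.neighborFinset u) = m + 2) :
    #(G.interedges (G.neighborFinset u) (G.neighborFinset u)ᶜ) ≤
      2 * (N + 1) + k * (N + m) + m * c := by
  set A := G.neighborFinset u
  have hpair_subset : {a, b} ⊆ A := by simp [A, insert_subset_iff, hua, hub]
  have hpair : #({a, b} : Finset V) = 2 := card_pair hab.ne
  set X := (G.neighborFinset a ∩ Aᶜ).erase u
  have hX_compl : X ⊆ Aᶜ := (erase_subset _ _).trans inter_subset_right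
  have hX : #X = N := by
    rw [card_erase_of_mem (by simp [A, hua.symm]), hN, Nat.add_sub_cancel]
  have hY : #(A \ {a, b}) = m := by rw [card_sdiff_of_subset hpair_subset, hm, hpair]; rfl
  have hrest : #(Aᶜ \ X) = c := by rw [card_sdiff_of_subset hX_compl, hc, hX]; omega
  have hfrom_pair : #(G.interedges {a, b} Aᶜ) ≤ 2 * (N + 1) :=
    hpair ▸ card_interedges_le_card_mul fun v hv => by
      obtain rfl | rfl := by simpa using hv
      exacts [hN.le, hb]
  have hto_X : #(G.interedges (A \ {a, b}) X) ≤ k * (N + m) := by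
    rw [card_interedges_comm, ← hX, ← hY]
    refine card_interedges_le_of_theta_free hfree hua hub hab (fun v hv => ?_) subset_rfl
      (disjoint_compl_left.mono hX_compl sdiff_subset)
    obtain ⟨hvu, hva, hvA⟩ : v ≠ u ∧ v ∈ G.neighborFinset a ∧ v ∉ A := by simpa [X] using hv
    have hvb : v ≠ b := by
      rintro rfl
      exact hvA (by simpa [A] using hub)
    simp [hva, hvu, hvb]
  have hto_rest : #(G.interedges (A \ {a, b}) (Aᶜ \ X)) ≤ m * c := by
    simpa only [hY, hrest] using G.card_interedges_le_mul (A \ {a, b}) (Aᶜ \ X)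
  rw [← card_interedges_sdiff_add_left G hpair_subset,
    ← card_interedges_sdiff_add_right G (A \ {a, b}) hX_compl]
  linarith

lemma exists_adj_forall_card_inter_le {S : Finset V} (h : ¬ G.IsIndepSet (S : Set V))
    (T : Finset V) :
    ∃ a ∈ nonisolated G S, ∃ b ∈ nonisolated G S, G.Adj a b ∧
      ∀ v ∈ nonisolated G S, #(G.neighborFinset v ∩ T) ≤ #(G.neighborFinset a ∩ T) := by
  have hne : (nonisolated G S).Nonempty := by
    simp only [SimpleGraph.IsIndepSet, Set.Pairwise, mem_coe, not_forall, not_not] at h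
    obtain ⟨v, hv, w, hw, -, hvw⟩ := h
    exact ⟨v, mem_filter.2 ⟨hv, w, hw, hvw⟩⟩
  obtain ⟨a, ha, hmax⟩ := exists_max_image _ (fun v => #(G.neighborFinset v ∩ T)) hne
  obtain ⟨haS, b, hbS, hab⟩ := mem_filter.1 ha
  exact ⟨a, ha, b, mem_filter.2 ⟨hbS, a, haS, hab.symm⟩, hab, hmax⟩

lemma twoWalkCount_lt_of_not_isIndepSet {k : ℕ} (hfree : ¬ Contains G (theta (2 * (k + 1))))
    (hn : 14 * (k + 1) ≤ Fintype.card V) {u : V}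
    (h : ¬ G.IsIndepSet (G.neighborFinset u : Set V)) :
    twoWalkCount G u < Fintype.card V ^ 2 / 4 := by
  set A := G.neighborFinset u with hA
  set P := nonisolated G A
  obtain ⟨a, haP, b, hbP, hab, hmax⟩ := exists_adj_forall_card_inter_le h Aᶜ
  have hua : G.Adj u a := (G.mem_neighborFinset u a).1 (nonisolated_subset A haP)
  have hub : G.Adj u b := (G.mem_neighborFinset u b).1 (nonisolated_subset A hbP)
  obtain ⟨N, hN⟩ : ∃ N, #(G.neighborFinset a ∩ Aᶜ) = N + 1 :=
    Nat.exists_eq_add_one.2 (card_pos.2 ⟨u, by simp [hA, hua.symm]⟩)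
  have hNc : N + 1 ≤ #Aᶜ := hN ▸ card_le_card inter_subset_right
  obtain ⟨c, hc⟩ : ∃ c, #Aᶜ = N + c := Nat.exists_eq_add_of_le (Nat.le_of_succ_le hNc)
  obtain ⟨m, hm⟩ : ∃ m, #A = m + 2 := by
    have hpair : 1 < #A :=
      one_lt_card.2 ⟨a, nonisolated_subset A haP, b, nonisolated_subset A hbP, hab.ne⟩
    exact ⟨#A - 2, by omega⟩
  have hcard : #A + #Aᶜ = Fintype.card V := card_add_card_compl A
  have hD : ∀ v ∈ P, #(G.neighborFinset v ∩ Aᶜ) ≤ N + 1 := fun v hv => (hmax v hv).trans hN.le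
  obtain hlt | hge := lt_or_ge (N + 1 + 2 * (k + 1)) #Aᶜ
  · exact (twoWalkCount_lt_card_mul_card_compl hfree ⟨a, haP⟩ hD hlt).trans_le
      (card_mul_card_compl_le A)
  · have h₁ : twoWalkCount G u ≤ (m + 2) * (N + 1 + 2 * (k + 1)) :=
      hm ▸ twoWalkCount_le_card_mul hfree hD hge
    have h₂ : twoWalkCount G u ≤
        2 * (k + 1) * (m + 2) + (2 * (N + 1) + k * (N + m) + m * c) := by
      rw [twoWalkCount_eq]
      refine add_le_add ((card_interedges_neighborFinset_le hfree u).trans ?_)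
        (card_interedges_compl_le_of_adj hfree hua hub hab hN (hD b hbP) hc hm)
      rw [← hm]
      exact Nat.mul_le_mul_left _ (card_le_card (nonisolated_subset A))
    refine lt_sq_div_four_of_four_mul_add_one_lt ?_
    zify at h₁ h₂ ⊢
    refine four_mul_add_one_lt_sq (K := k + 1) (a := m + 2) (N := N) (c := c) ?_ ?_ ?_ ?_ ?_ h₁
      (by simpa using h₂)
    all_goals omega

end TwoWalks

section Spectral

open scoped Matrix

lemma mem_spectrum_iff_exists_mulVec_eq {K ι : Type*} [Field K] [Fintype ι] [DecidableEq ι]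
    {M : Matrix ι ι K} {μ : K} : μ ∈ spectrum K M ↔ ∃ x ≠ 0, M *ᵥ x = μ • x := by
  rw [← Matrix.spectrum_toLin', ← Module.End.hasEigenvalue_iff_mem_spectrum]
  constructor
  · intro h
    obtain ⟨x, hx⟩ := h.exists_hasEigenvector
    exact ⟨x, hx.2, by simpa only [Matrix.toLin'_apply] using hx.apply_eq_smul⟩
  · rintro ⟨x, hx0, hx⟩
    exact Module.End.hasEigenvalue_of_hasEigenvector
      ⟨Module.End.mem_eigenspace_iff.2 (by rwa [Matrix.toLin'_apply]), hx0⟩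

lemma exists_forall_abs_le {ι : Type*} [Finite ι] {x : ι → ℝ} (hx : x ≠ 0) :
    ∃ u, 0 < |x u| ∧ ∀ w, |x w| ≤ |x u| := by
  obtain ⟨i, hi⟩ := Function.ne_iff.1 hx
  have : Nonempty ι := ⟨i⟩
  obtain ⟨u, hu⟩ := Finite.exists_max fun w => |x w|
  exact ⟨u, (abs_pos.2 hi).trans_le (hu i), hu⟩

variable {V : Type*} [Fintype V] {G : SimpleGraph V} {μ : ℝ} {x : V → ℝ}

lemma sum_sum_neighborFinset_const (u : V) (c : ℝ) :
    ∑ v ∈ G.neighborFinset u, ∑ _w ∈ G.neighborFinset v, c = twoWalkCount G u * c := by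
  simp only [twoWalkCount, sum_const, nsmul_eq_mul, card_neighborFinset_eq_degree, Nat.cast_sum,
    sum_mul]

lemma sum_sum_neighborFinset_of_mulVec_eq (hx : G.adjMatrix ℝ *ᵥ x = μ • x) (u : V) :
    ∑ v ∈ G.neighborFinset u, ∑ w ∈ G.neighborFinset v, x w = μ ^ 2 * x u := by
  have hsum (v : V) : ∑ w ∈ G.neighborFinset v, x w = μ * x v := by
    rw [← adjMatrix_mulVec_apply, hx, Pi.smul_apply, smul_eq_mul]
  simp only [hsum, ← mul_sum]
  ring

lemma sq_mul_abs_le_sum_sum_neighborFinset (hx : G.adjMatrix ℝ *ᵥ x = μ • x) (u : V) :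
    μ ^ 2 * |x u| ≤ ∑ v ∈ G.neighborFinset u, ∑ w ∈ G.neighborFinset v, |x w| := by
  rw [← abs_of_nonneg (sq_nonneg μ), ← abs_mul, ← sum_sum_neighborFinset_of_mulVec_eq hx]
  exact (abs_sum_le_sum_abs _ _).trans (sum_le_sum fun v _ => abs_sum_le_sum_abs _ _)

lemma sq_le_twoWalkCount (hx : G.adjMatrix ℝ *ᵥ x = μ • x) {u : V} (hu : 0 < |x u|)
    (hmax : ∀ w, |x w| ≤ |x u|) : μ ^ 2 ≤ twoWalkCount G u := by
  refine le_of_mul_le_mul_right ?_ hu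
  calc μ ^ 2 * |x u|
      ≤ ∑ v ∈ G.neighborFinset u, ∑ w ∈ G.neighborFinset v, |x w| :=
        sq_mul_abs_le_sum_sum_neighborFinset hx u
    _ ≤ ∑ v ∈ G.neighborFinset u, ∑ _w ∈ G.neighborFinset v, |x u| :=
        sum_le_sum fun v _ => sum_le_sum fun w _ => hmax w
    _ = twoWalkCount G u * |x u| := sum_sum_neighborFinset_const u _

lemma abs_eq_of_twoWalkCount_le_sq (hx : G.adjMatrix ℝ *ᵥ x = μ • x) {u v w : V}
    (hmax : ∀ w, |x w| ≤ |x u|) (hT : twoWalkCount G u ≤ μ ^ 2) (huv : G.Adj u v)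
    (hvw : G.Adj v w) : |x w| = |x u| := by
  have hinner (v : V) :
      ∑ w ∈ G.neighborFinset v, |x w| ≤ ∑ _w ∈ G.neighborFinset v, |x u| :=
    sum_le_sum fun w _ => hmax w
  have hwalks : ∑ v ∈ G.neighborFinset u, ∑ w ∈ G.neighborFinset v, |x w| =
      ∑ v ∈ G.neighborFinset u, ∑ _w ∈ G.neighborFinset v, |x u| := by
    refine (sum_le_sum fun v _ => hinner v).antisymm ?_
    rw [sum_sum_neighborFinset_const]
    exact (mul_le_mul_of_nonneg_right hT (abs_nonneg _)).trans
      (sq_mul_abs_le_sum_sum_neighborFinset hx u)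
  have hv := (sum_eq_sum_iff_of_le fun v _ => hinner v).1 hwalks v
    ((G.mem_neighborFinset u v).2 huv)
  exact (sum_eq_sum_iff_of_le fun w _ => hmax w).1 hv w ((G.mem_neighborFinset v w).2 hvw)

end Spectral

section SpectralRadius

open scoped Matrix

variable {n : ℕ} {G H : SimpleGraph (Fin n)}

lemma adjSpectralRadius_le_sqrt {F : ℕ} (hT : ∀ u, twoWalkCount G u ≤ F) :
    adjSpectralRadius G ≤ √F := by
  refine Real.sSup_le (fun μ hμ => Real.le_sqrt_of_sq_le ?_) (Real.sqrt_nonneg _)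
  obtain ⟨x, hx0, hx⟩ := mem_spectrum_iff_exists_mulVec_eq.1 hμ
  obtain ⟨u, hu, hmax⟩ := exists_forall_abs_le hx0
  exact (sq_le_twoWalkCount hx hu hmax).trans (Nat.cast_le.2 (hT u))

lemma le_adjSpectralRadius {μ : ℝ} {x : Fin n → ℝ} (hx0 : x ≠ 0)
    (hx : G.adjMatrix ℝ *ᵥ x = μ • x) : μ ≤ adjSpectralRadius G :=
  le_csSup (Matrix.finite_spectrum _).bddAbove (mem_spectrum_iff_exists_mulVec_eq.2 ⟨x, hx0, hx⟩)

lemma exists_mulVec_eq_adjSpectralRadius_smul (h : 0 < adjSpectralRadius G) :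
    ∃ x ≠ 0, G.adjMatrix ℝ *ᵥ x = adjSpectralRadius G • x := by
  refine mem_spectrum_iff_exists_mulVec_eq.1 (Set.Nonempty.csSup_mem ?_ (Matrix.finite_spectrum _))
  rw [Set.nonempty_iff_ne_empty]
  intro hempty
  rw [adjSpectralRadius, hempty, Real.sSup_empty] at h
  exact h.false

lemma adjSpectralRadius_congr (e : G ≃g H) : adjSpectralRadius G = adjSpectralRadius H := by
  rw [adjSpectralRadius, adjSpectralRadius, ← e.reindex_adjMatrix ℝ,
    ← Matrix.coe_reindexAlgEquiv ℝ ℝ (e : Fin n ≃ Fin n), AlgEquiv.spectrum_eq]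

end SpectralRadius

section CompleteBipartite

open scoped Matrix

variable {V : Type*} {G H : SimpleGraph V} {A B A' B' : Finset V}

/-- `G` is the complete bipartite graph with sides `A` and `B`, which partition the vertices of
`G`; either side may be empty. -/
structure IsCompleteBipartition (G : SimpleGraph V) (A B : Finset V) : Prop where
  mem_right_iff (v : V) : v ∈ B ↔ v ∉ A
  adj_iff (v w : V) : G.Adj v w ↔ ¬(v ∈ A ↔ w ∈ A)

namespace IsCompleteBipartition

lemma symm (h : IsCompleteBipartition G A B) : IsCompleteBipartition G B A where
  mem_right_iff v := by rw [h.mem_right_iff, not_not]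
  adj_iff v w := by rw [h.adj_iff, h.mem_right_iff, h.mem_right_iff, not_iff_not (a := v ∈ A)]

lemma nonempty_iso [Finite V] (hG : IsCompleteBipartition G A B)
    (hH : IsCompleteBipartition H A' B') (hcard : #A = #A') : Nonempty (G ≃g H) := by
  let e : Equiv.Perm V := (equivOfCardEq hcard).extendSubtype
  have he (v : V) : e v ∈ A' ↔ v ∈ A :=
    ⟨fun h => by_contra fun hv => Equiv.extendSubtype_not_mem _ v hv h,
      Equiv.extendSubtype_mem _ v⟩
  exact ⟨e, fun {v w} => by rw [hH.adj_iff, hG.adj_iff, he, he]⟩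

variable [Fintype V]

lemma card_add_card (h : IsCompleteBipartition G A B) : #A + #B = Fintype.card V := by
  obtain rfl : B = Aᶜ := by
    ext v
    rw [h.mem_right_iff, mem_compl]
  exact card_add_card_compl A

lemma neighborFinset_of_mem (h : IsCompleteBipartition G A B) {v : V} (hv : v ∈ A) :
    G.neighborFinset v = B := by
  ext w
  simp [h.adj_iff v w, h.mem_right_iff, hv]

lemma twoWalkCount_of_mem (h : IsCompleteBipartition G A B) {v : V} (hv : v ∈ A) :
    twoWalkCount G v = #A * #B := by
  rw [twoWalkCount, h.neighborFinset_of_mem hv, mul_comm]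
  refine sum_const_nat fun w hw => ?_
  rw [← card_neighborFinset_eq_degree, h.symm.neighborFinset_of_mem hw]

lemma twoWalkCount_eq (h : IsCompleteBipartition G A B) (v : V) :
    twoWalkCount G v = #A * #B := by
  by_cases hv : v ∈ A
  · exact h.twoWalkCount_of_mem hv
  · rw [h.symm.twoWalkCount_of_mem ((h.mem_right_iff v).2 hv), mul_comm]

lemma mulVec_eq (h : IsCompleteBipartition G A B) :
    G.adjMatrix ℝ *ᵥ (fun v => if v ∈ A then √(#B) else √(#A)) =
      √(#A * #B) • fun v => if v ∈ A then √(#B) else √(#A) := by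
  ext v
  rw [adjMatrix_mulVec_apply, Pi.smul_apply, smul_eq_mul, Real.sqrt_mul (Nat.cast_nonneg _)]
  by_cases hv : v ∈ A
  · rw [h.neighborFinset_of_mem hv, if_pos hv,
      sum_congr rfl fun w hw => if_neg ((h.mem_right_iff w).1 hw), sum_const, nsmul_eq_mul,
      mul_assoc, Real.mul_self_sqrt (Nat.cast_nonneg _), mul_comm]
  · rw [h.symm.neighborFinset_of_mem ((h.mem_right_iff v).2 hv), if_neg hv,
      sum_congr rfl fun w hw => if_pos hw, sum_const, nsmul_eq_mul, mul_right_comm,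
      Real.mul_self_sqrt (Nat.cast_nonneg _)]

lemma adjSpectralRadius_eq {n : ℕ} {G : SimpleGraph (Fin n)} {A B : Finset (Fin n)}
    (h : IsCompleteBipartition G A B) (hpos : 0 < #A * #B) :
    adjSpectralRadius G = √(#A * #B : ℕ) := by
  refine (adjSpectralRadius_le_sqrt fun u => (h.twoWalkCount_eq u).le).antisymm ?_
  rw [Nat.cast_mul]
  refine le_adjSpectralRadius (fun h0 => ?_) h.mulVec_eq
  obtain ⟨u, hu⟩ := card_pos.1 (Nat.pos_of_mul_pos_right hpos)
  have hB : √(#B) = 0 := by simpa only [if_pos hu, Pi.zero_apply] using congrFun h0 u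
  exact (Real.sqrt_pos.2 (Nat.cast_pos.2 (Nat.pos_of_mul_pos_left hpos))).ne' hB

end IsCompleteBipartition

variable [Fintype V]

lemma card_mul_card_compl_of_twoWalkCount_eq {u : V}
    (hind : G.IsIndepSet (G.neighborFinset u : Set V))
    (hT : twoWalkCount G u = Fintype.card V ^ 2 / 4) :
    #(G.neighborFinset u) * #(G.neighborFinset u)ᶜ = Fintype.card V ^ 2 / 4 := by
  refine (card_mul_card_compl_le _).antisymm (hT.ge.trans ?_)
  rw [twoWalkCount_eq_of_isIndepSet hind]
  exact G.card_interedges_le_mul _ _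

lemma adj_of_twoWalkCount_eq {u v w : V} (hind : G.IsIndepSet (G.neighborFinset u : Set V))
    (hT : twoWalkCount G u = Fintype.card V ^ 2 / 4) (hv : G.Adj u v) (hw : ¬ G.Adj u w) :
    G.Adj v w := by
  have hall := twoWalkCount_eq_of_isIndepSet hind
  rw [hT, ← card_mul_card_compl_of_twoWalkCount_eq hind hT, ← card_product] at hall
  exact card_filter_eq_iff.1 hall.symm (v, w) (by simp [hv, hw])

lemma isCompleteBipartition_neighborFinset {u : V} (hne : (G.neighborFinset u).Nonempty)
    (hind : ∀ v, ¬ G.Adj u v → G.IsIndepSet (G.neighborFinset v : Set V))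
    (hadj : ∀ v, G.Adj u v → ∀ w, ¬ G.Adj u w → G.Adj v w) :
    IsCompleteBipartition G (G.neighborFinset u) (G.neighborFinset u)ᶜ := by
  obtain ⟨a, ha⟩ := hne
  rw [mem_neighborFinset] at ha
  refine ⟨fun v => mem_compl, fun v w => ?_⟩
  rw [mem_neighborFinset, mem_neighborFinset]
  by_cases hv : G.Adj u v <;> by_cases hw : G.Adj u w <;>
    simp only [hv, hw, iff_true, iff_false, not_true_eq_false, not_false_eq_true, iff_self]
  · exact fun hvw => hind u G.irrefl (by simpa) (by simpa) hvw.ne hvw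
  · exact hadj v hv w hw
  · exact (hadj w hw v hv).symm
  · exact fun hvw => hind v hv (by simpa using (hadj a ha v hv).symm) (by simpa)
      (ne_of_mem_of_not_mem ((G.mem_neighborFinset u a).2 ha) (by simpa)) (hadj a ha w hw)

lemma exists_isCompleteBipartition_of_mulVec_eq (hpos : 0 < Fintype.card V ^ 2 / 4)
    (hT : ∀ u, twoWalkCount G u ≤ Fintype.card V ^ 2 / 4)
    (hind : ∀ u, twoWalkCount G u = Fintype.card V ^ 2 / 4 →
      G.IsIndepSet (G.neighborFinset u : Set V))
    {x : V → ℝ} (hx0 : x ≠ 0)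
    (hx : G.adjMatrix ℝ *ᵥ x = √(Fintype.card V ^ 2 / 4 : ℕ) • x) :
    ∃ A B, IsCompleteBipartition G A B ∧ #A * #B = Fintype.card V ^ 2 / 4 := by
  have hsq : √(Fintype.card V ^ 2 / 4 : ℕ) ^ 2 = (Fintype.card V ^ 2 / 4 : ℕ) :=
    Real.sq_sqrt (Nat.cast_nonneg _)
  have hTmax {v : V} (hv : 0 < |x v|) (hmax : ∀ w, |x w| ≤ |x v|) :
      twoWalkCount G v = Fintype.card V ^ 2 / 4 :=
    (hT v).antisymm (Nat.cast_le.1 (hsq.ge.trans (sq_le_twoWalkCount hx hv hmax)))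
  obtain ⟨u, hu, hmax⟩ := exists_forall_abs_le hx0
  have hTu := hTmax hu hmax
  have hcard := card_mul_card_compl_of_twoWalkCount_eq (hind u hTu) hTu
  have hadj (v : V) (hv : G.Adj u v) (w : V) (hw : ¬ G.Adj u w) : G.Adj v w :=
    adj_of_twoWalkCount_eq (hind u hTu) hTu hv hw
  obtain ⟨a, ha⟩ := card_pos.1 (Nat.pos_of_mul_pos_right (hcard ▸ hpos))
  refine ⟨_, _, isCompleteBipartition_neighborFinset ⟨a, ha⟩ (fun v hv => hind v ?_) hadj, hcard⟩
  rw [mem_neighborFinset] at ha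
  have hxv : |x v| = |x u| :=
    abs_eq_of_twoWalkCount_le_sq hx hmax ((Nat.cast_le.2 (hT u)).trans hsq.ge) ha (hadj a ha v hv)
  exact hTmax (hxv ▸ hu) (hxv ▸ hmax)

end CompleteBipartite

section Turan

lemma eq_or_eq_of_mul_eq_sq_div_four {a b : ℕ} (h : a * b = (a + b) ^ 2 / 4) :
    a = (a + b + 1) / 2 ∨ b = (a + b + 1) / 2 := by
  wlog hab : a ≤ b generalizing a b
  · simpa only [add_comm, or_comm] using
      this (by rwa [mul_comm, add_comm]) (Nat.le_of_not_ge hab)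
  obtain ⟨d, rfl⟩ := Nat.exists_eq_add_of_le hab
  have hd : d < 2 := by
    by_contra! hd
    have hd2 : 2 * 2 ≤ d * d := Nat.mul_le_mul hd hd
    ring_nf at h hd2
    omega
  omega

lemma add_one_div_two_mul_div_two (n : ℕ) : (n + 1) / 2 * (n / 2) = n ^ 2 / 4 := by
  obtain ⟨m, rfl | rfl⟩ := n.even_or_odd'
  · rw [show (2 * m + 1) / 2 = m by omega, show 2 * m / 2 = m by omega]
    ring_nf
    omega
  · rw [show (2 * m + 1 + 1) / 2 = m + 1 by omega, show (2 * m + 1) / 2 = m by omega]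
    ring_nf
    omega

lemma card_filter_mod_two_eq_zero (n : ℕ) : #{i : Fin n | (i : ℕ) % 2 = 0} = (n + 1) / 2 := by
  rw [card_filter, Fin.sum_univ_eq_sum_range fun i => if i % 2 = 0 then 1 else 0]
  induction n with
  | zero => rfl
  | succ n ih =>
    rw [sum_range_succ, ih]
    split_ifs <;> omega

lemma isCompleteBipartition_turanGraph (n : ℕ) :
    IsCompleteBipartition (turanGraph n 2) {i | (i : ℕ) % 2 = 0} {i | (i : ℕ) % 2 ≠ 0} where
  mem_right_iff i := by simp
  adj_iff i j := by
    simp only [turanGraph_adj, mem_filter_univ]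
    omega

lemma card_mul_card_turanGraph (n : ℕ) :
    #{i : Fin n | (i : ℕ) % 2 = 0} * #{i : Fin n | (i : ℕ) % 2 ≠ 0} = n ^ 2 / 4 := by
  have hcard := (isCompleteBipartition_turanGraph n).card_add_card
  rw [card_filter_mod_two_eq_zero, Fintype.card_fin] at hcard
  rw [card_filter_mod_two_eq_zero, ← add_one_div_two_mul_div_two]
  congr 1
  omega

lemma adjSpectralRadius_turanGraph {n : ℕ} (hn : 0 < n ^ 2 / 4) :
    adjSpectralRadius (turanGraph n 2) = √(n ^ 2 / 4 : ℕ) := by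
  rw [← card_mul_card_turanGraph] at hn ⊢
  exact (isCompleteBipartition_turanGraph n).adjSpectralRadius_eq hn

lemma IsCompleteBipartition.nonempty_iso_turanGraph {n : ℕ} {G : SimpleGraph (Fin n)}
    {A B : Finset (Fin n)} (h : IsCompleteBipartition G A B) (hAB : #A * #B = n ^ 2 / 4) :
    Nonempty (G ≃g turanGraph n 2) := by
  have hn : #A + #B = n := h.card_add_card.trans (Fintype.card_fin n)
  have hturan := card_filter_mod_two_eq_zero n
  obtain hA | hB := eq_or_eq_of_mul_eq_sq_div_four (hAB.trans (by rw [hn]))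
  · exact h.nonempty_iso (isCompleteBipartition_turanGraph n) (by omega)
  · exact h.symm.nonempty_iso (isCompleteBipartition_turanGraph n) (by omega)

lemma nonempty_iso_turanGraph_of_adjSpectralRadius_eq {n : ℕ} {G : SimpleGraph (Fin n)}
    (hn : 0 < n ^ 2 / 4) (hT : ∀ u, twoWalkCount G u ≤ n ^ 2 / 4)
    (hind : ∀ u, twoWalkCount G u = n ^ 2 / 4 → G.IsIndepSet (G.neighborFinset u : Set (Fin n)))
    (hρ : adjSpectralRadius G = √(n ^ 2 / 4 : ℕ)) : Nonempty (G ≃g turanGraph n 2) := by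
  obtain ⟨x, hx0, hx⟩ := exists_mulVec_eq_adjSpectralRadius_smul (G := G)
    (hρ ▸ Real.sqrt_pos.2 (Nat.cast_pos.2 hn))
  rw [hρ] at hx
  obtain ⟨A, B, hG, hAB⟩ := exists_isCompleteBipartition_of_mulVec_eq (G := G)
    (by simpa only [Fintype.card_fin]) (by simpa only [Fintype.card_fin])
    (by simpa only [Fintype.card_fin]) hx0 (by simpa only [Fintype.card_fin])
  exact hG.nonempty_iso_turanGraph (by simpa only [Fintype.card_fin] using hAB)

end Turan

/-- Theorem 1.7, even case: for even `r ≥ 2` and `n ≥ 7r`, the unique spectral extremal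
`θ_{r+1}`-free graph on `n` vertices is `T_{n,2}`. -/
theorem stmt4 (r n : ℕ) (hr : 2 ≤ r) (heven : Even r) (hn : 7 * r ≤ n)
    (G : SimpleGraph (Fin n)) (hfree : ¬ Contains G (theta r)) :
    adjSpectralRadius G ≤ adjSpectralRadius (turanGraph n 2) ∧
    (adjSpectralRadius G = adjSpectralRadius (turanGraph n 2) ↔
      Nonempty (G ≃g turanGraph n 2)) := by
  obtain ⟨k, rfl⟩ : ∃ k, r = 2 * (k + 1) := by
    obtain ⟨m, rfl⟩ := heven
    exact ⟨m - 1, by omega⟩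
  have hlt (u : Fin n) (h : ¬ G.IsIndepSet (G.neighborFinset u : Set (Fin n))) :
      twoWalkCount G u < n ^ 2 / 4 := by
    simpa only [Fintype.card_fin] using
      twoWalkCount_lt_of_not_isIndepSet hfree (by rw [Fintype.card_fin]; omega) h
  have hle (u : Fin n) : twoWalkCount G u ≤ n ^ 2 / 4 := by
    by_cases h : G.IsIndepSet (G.neighborFinset u : Set (Fin n))
    · simpa only [Fintype.card_fin] using twoWalkCount_le_of_isIndepSet h
    · exact (hlt u h).le
  have hpos : 0 < n ^ 2 / 4 := Nat.div_pos (by nlinarith) (by norm_num)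
  have hρ := adjSpectralRadius_turanGraph hpos
  refine ⟨hρ ▸ adjSpectralRadius_le_sqrt hle, fun h => ?_, fun ⟨e⟩ => adjSpectralRadius_congr e⟩
  exact nonempty_iso_turanGraph_of_adjSpectralRadius_eq hpos hle
    (fun u hu => by_contra fun h => (hlt u h).ne hu) (h.trans hρ)
end

section
/- Let r ≥ 1 and let n be an integer with n ≥ (13/2)r (i.e., 2n ≥ 13r). Then ex(n, B_{r+1}) = ⌊n²/4⌋. -/
open SimpleGraph Finset

attribute [local instance] Classical.propDecidable

/-!
Let `d` denote degrees, `c u v` the number of common neighbours of `u` and `v`, `n` the number of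
vertices, and suppose that `6 * c u v ≤ n` on every edge. For any three vertices
inclusion-exclusion gives `d u + d v + d w ≤ n + c u v + c v w + c w u`; summed over the ordered
triangles this says that `∑ c u v * (2 * n + 6 * c u v - 3 * (d u + d v)) ≥ 0`, the sum running
over the ordered edges. Put `D = d u + d v`. Then
`n * (n - D) = (n - 6 * c) * (n + 2 * c - D) + 2 * c * (2 * n + 6 * c - 3 * D)`,
where on an edge the first product is nonnegative because `D ≤ n + c`. Hence the sum of `n - D`
over the ordered edges is nonnegative, that is `2 * ∑ d u ^ 2 ≤ n * ∑ d u`, and the Cauchy-Schwarz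
inequality bounds the number of edges by `n ^ 2 / 4`.
-/

section Counting

variable {V : Type*} [Fintype V]

theorem card_add_card_add_card_le (s t u : Finset V) :
    #s + #t + #u ≤ Fintype.card V + #(s ∩ t) + #(t ∩ u) + #(u ∩ s) := by
  have h_union : #((s ∪ t) ∩ u) ≤ #(t ∩ u) + #(u ∩ s) := by
    rw [union_inter_distrib_right, union_comm, inter_comm s u]
    exact card_union_le _ _
  have h_univ : #(s ∪ t ∪ u) ≤ Fintype.card V := card_le_univ _
  have h_two := card_union_add_card_inter s t
  have h_three := card_union_add_card_inter (s ∪ t) u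
  omega

variable (G : SimpleGraph V)

/-- The codegree of `u` and `v`: the number of their common neighbours. For an edge `uv` this is the
size of the largest book whose spine is `uv`. -/
noncomputable def codegree (u v : V) : ℕ := #(G.neighborFinset u ∩ G.neighborFinset v)

theorem degree_add_degree_le (u v : V) :
    G.degree u + G.degree v ≤ Fintype.card V + codegree G u v := by
  rw [codegree, ← G.card_neighborFinset_eq_degree, ← G.card_neighborFinset_eq_degree,
    ← card_union_add_card_inter]
  gcongr
  exact card_le_univ _

theorem degree_add_degree_add_degree_le (u v w : V) :
    G.degree u + G.degree v + G.degree w ≤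
      Fintype.card V + codegree G u v + codegree G v w + codegree G w u := by
  simpa only [codegree, G.card_neighborFinset_eq_degree] using
    card_add_card_add_card_le (G.neighborFinset u) (G.neighborFinset v) (G.neighborFinset w)

theorem sum_neighborFinset_comm {M : Type*} [AddCommMonoid M] (f : V → V → M) :
    ∑ u, ∑ v ∈ G.neighborFinset u, f u v = ∑ u, ∑ v ∈ G.neighborFinset u, f v u :=
  sum_comm' fun u v ↦ by simp [G.adj_comm u v]

theorem sum_neighborFinset_add {R : Type*} [NonAssocSemiring R] (f : V → R) :
    ∑ u, ∑ v ∈ G.neighborFinset u, (f u + f v) = 2 * ∑ u, G.degree u * f u := by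
  have h_left : ∑ u, ∑ _v ∈ G.neighborFinset u, f u = ∑ u, G.degree u * f u := by
    simp only [sum_const, G.card_neighborFinset_eq_degree, nsmul_eq_mul]
  have h_right : ∑ u, ∑ v ∈ G.neighborFinset u, f v = ∑ u, G.degree u * f u := by
    rw [sum_neighborFinset_comm, h_left]
  simp only [sum_add_distrib, h_left, h_right, two_mul]

theorem sum_triangle_rotate {M : Type*} [AddCommMonoid M] (f : V → V → V → M) :
    ∑ u, ∑ v ∈ G.neighborFinset u, ∑ w ∈ G.neighborFinset u ∩ G.neighborFinset v, f v w u =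
      ∑ u, ∑ v ∈ G.neighborFinset u, ∑ w ∈ G.neighborFinset u ∩ G.neighborFinset v, f u v w := by
  rw [sum_neighborFinset_comm]
  refine sum_congr rfl fun u _ ↦ sum_comm' fun v w ↦ ?_
  simp only [mem_inter, mem_neighborFinset, G.adj_comm w v]
  tauto

theorem sum_triangle_add_add {R : Type*} [NonAssocSemiring R] (f : V → V → R) :
    ∑ u, ∑ v ∈ G.neighborFinset u, ∑ w ∈ G.neighborFinset u ∩ G.neighborFinset v,
        (f u v + f v w + f w u) =
      3 * ∑ u, ∑ v ∈ G.neighborFinset u, codegree G u v * f u v := by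
  have h_fst : ∑ u, ∑ v ∈ G.neighborFinset u,
      ∑ _w ∈ G.neighborFinset u ∩ G.neighborFinset v, f u v =
        ∑ u, ∑ v ∈ G.neighborFinset u, codegree G u v * f u v := by
    simp only [sum_const, nsmul_eq_mul, codegree]
  have h_snd := sum_triangle_rotate G fun u v _ ↦ f u v
  have h_trd := sum_triangle_rotate G fun _ v w ↦ f v w
  simp only [sum_add_distrib, h_trd, h_snd, h_fst]
  rw [← two_add_one_eq_three, add_mul, two_mul, one_mul]

theorem sum_codegree_mul_nonneg :
    0 ≤ ∑ u, ∑ v ∈ G.neighborFinset u, (codegree G u v : ℤ) *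
      (2 * Fintype.card V + 6 * codegree G u v - 3 * (G.degree u + G.degree v)) := by
  refine nonneg_of_mul_nonneg_right (a := 3) ?_ (by norm_num)
  rw [← sum_triangle_add_add]
  refine sum_nonneg fun u _ ↦ sum_nonneg fun v _ ↦ sum_nonneg fun w _ ↦ ?_
  have := degree_add_degree_add_degree_le G u v w
  omega

end Counting

section Codegree

variable {V : Type*} [Fintype V] {G : SimpleGraph V}

theorem two_mul_codegree_mul_le {u v : V} (h : 6 * codegree G u v ≤ Fintype.card V) :
    2 * ((codegree G u v : ℤ) *
        (2 * Fintype.card V + 6 * codegree G u v - 3 * (G.degree u + G.degree v))) ≤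
      Fintype.card V * (Fintype.card V - (G.degree u + G.degree v)) := by
  have h_codegree : (0 : ℤ) ≤ Fintype.card V - 6 * codegree G u v := by omega
  have h_degree :
      (0 : ℤ) ≤ Fintype.card V + 2 * codegree G u v - (G.degree u + G.degree v) := by
    have := degree_add_degree_le G u v
    omega
  linear_combination mul_nonneg h_codegree h_degree

theorem two_mul_sum_sq_degree_le
    (h : ∀ u v, G.Adj u v → 6 * codegree G u v ≤ Fintype.card V) :
    2 * ∑ u, G.degree u ^ 2 ≤ Fintype.card V * ∑ u, G.degree u := by
  cases isEmpty_or_nonempty V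
  · simp
  have h_sum : (0 : ℤ) ≤ Fintype.card V * ∑ u, ∑ v ∈ G.neighborFinset u,
      (Fintype.card V - (G.degree u + G.degree v) : ℤ) := calc
    0 ≤ 2 * ∑ u, ∑ v ∈ G.neighborFinset u, (codegree G u v : ℤ) *
          (2 * Fintype.card V + 6 * codegree G u v - 3 * (G.degree u + G.degree v)) :=
      mul_nonneg zero_le_two (sum_codegree_mul_nonneg G)
    _ ≤ _ := by
      simp only [mul_sum]
      exact sum_le_sum fun u _ ↦ sum_le_sum fun v hv ↦
        two_mul_codegree_mul_le (h u v ((G.mem_neighborFinset u v).1 hv))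
  have h_nonneg := nonneg_of_mul_nonneg_right h_sum (mod_cast Fintype.card_pos)
  simp only [sum_sub_distrib, sum_neighborFinset_add G fun u ↦ (G.degree u : ℤ), sum_const,
    G.card_neighborFinset_eq_degree, nsmul_eq_mul, ← sum_mul, ← sq] at h_nonneg
  zify
  linarith

theorem four_mul_card_edgeFinset_le_of_sum_sq_degree_le
    (h : 2 * ∑ u, G.degree u ^ 2 ≤ Fintype.card V * ∑ u, G.degree u) :
    4 * #G.edgeFinset ≤ Fintype.card V ^ 2 := by
  have h_cauchy : (∑ u, G.degree u) ^ 2 ≤ Fintype.card V * ∑ u, G.degree u ^ 2 :=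
    sq_sum_le_card_mul_sum_sq
  rw [G.sum_degrees_eq_twice_card_edges] at h h_cauchy
  obtain h_zero | h_pos := (#G.edgeFinset).eq_zero_or_pos
  · simp [h_zero]
  · refine le_of_mul_le_mul_left ?_ h_pos
    linarith [Nat.mul_le_mul_left (Fintype.card V) h]

theorem exists_adj_card_lt_six_mul_codegree (h : Fintype.card V ^ 2 < 4 * #G.edgeFinset) :
    ∃ u v, G.Adj u v ∧ Fintype.card V < 6 * codegree G u v := by
  contrapose! h
  exact four_mul_card_edgeFinset_le_of_sum_sq_degree_le (two_mul_sum_sq_degree_le h)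

end Codegree

theorem contains_book_of_le_codegree {V : Type*} [Fintype V] {G : SimpleGraph V} {s : ℕ} {u v : V}
    (huv : G.Adj u v) (hs : s ≤ codegree G u v) : Contains G (book s) := by
  obtain ⟨pages, h_sub, h_card⟩ := exists_subset_card_eq hs
  let e := (pages.equivFinOfCardEq h_card).symm
  have h_page (i : Fin s) : G.Adj u (e i) ∧ G.Adj v (e i) := by simpa using h_sub (e i).2
  have h_spine (i : Fin 2) (j : Fin s) : G.Adj (![u, v] i) (e j) := by
    fin_cases i
    exacts [(h_page j).1, (h_page j).2]
  have h_edge (i j : Fin 2) (hij : i ≠ j) : G.Adj (![u, v] i) (![u, v] j) := by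
    fin_cases i <;> fin_cases j <;> simp_all [huv.symm]
  refine ⟨⟨Sum.elim ![u, v] (fun i ↦ (e i : V)), Function.Injective.sumElim ?_
    (Subtype.val_injective.comp e.injective) fun i j ↦ (h_spine i j).ne⟩, ?_⟩
  · exact fun i j hij ↦ not_imp_comm.1 (h_edge i j) (hij ▸ G.irrefl)
  · rintro (i | i) (j | j) hij
    · exact h_edge i j (ne_of_apply_ne Sum.inl hij.ne)
    · exact h_spine i j
    · exact (h_spine j i).symm
    · simp [book] at hij

theorem not_contains_book_of_cliqueFree {α : Type*} {G : SimpleGraph α} (hG : G.CliqueFree 3)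
    (r : ℕ) : ¬ Contains G (book (r + 1)) := by
  rintro ⟨f, hf⟩
  have h_spine := hf (.inl 0) (.inl 1) (by simp [book])
  have h_fst := hf (.inl 0) (.inr 0) (by simp [book])
  have h_snd := hf (.inl 1) (.inr 0) (by simp [book])
  exact (is3Clique_triple_iff.2 ⟨h_spine, h_fst, h_snd⟩).not_cliqueFree hG

theorem edgeCount_eq_card_edgeFinset {V : Type*} (G : SimpleGraph V) [Fintype G.edgeSet] :
    edgeCount G = #G.edgeFinset :=
  Set.ncard_eq_toFinset_card' G.edgeSet

theorem edgeCount_eq_of_iso {V W : Type*} {G : SimpleGraph V} {H : SimpleGraph W} (e : G ≃g H) :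
    edgeCount G = edgeCount H :=
  Nat.card_congr e.mapEdgeSet

theorem edgeCount_turanGraph_two (n : ℕ) : edgeCount (turanGraph n 2) = n ^ 2 / 4 := by
  rw [edgeCount_eq_card_edgeFinset, card_edgeFinset_turanGraph]
  obtain ⟨k, rfl | rfl⟩ := n.even_or_odd'
  · simp
  · have h_sq : (2 * k + 1) ^ 2 = 4 * (k ^ 2 + k) + 1 := by ring
    have h_mod : (2 * k + 1) % 2 = 1 := by omega
    rw [h_sq, h_mod, Nat.choose_eq_zero_of_lt one_lt_two]
    omega

theorem exists_cliqueFree_three_edgeCount_eq (V : Type*) [Fintype V] :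
    ∃ G : SimpleGraph V, G.CliqueFree 3 ∧ edgeCount G = Fintype.card V ^ 2 / 4 := by
  obtain ⟨G, _, hG⟩ := exists_isTuranMaximal (V := V) two_pos
  obtain ⟨e⟩ := hG.nonempty_iso_turanGraph
  exact ⟨G, hG.1, (edgeCount_eq_of_iso e).trans (edgeCount_turanGraph_two _)⟩

theorem stmt6_general {V : Type*} [Fintype V] (r : ℕ) (h : 6 * r ≤ Fintype.card V) :
    (∀ G : SimpleGraph V, ¬ Contains G (book (r + 1)) →
      edgeCount G ≤ Fintype.card V ^ 2 / 4) ∧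
    (∃ G : SimpleGraph V, ¬ Contains G (book (r + 1)) ∧
      edgeCount G = Fintype.card V ^ 2 / 4) := by
  constructor
  · intro G hG
    rw [edgeCount_eq_card_edgeFinset, Nat.le_div_iff_mul_le four_pos, mul_comm]
    contrapose! hG
    obtain ⟨u, v, huv, h_codegree⟩ := exists_adj_card_lt_six_mul_codegree hG
    exact contains_book_of_le_codegree huv (by omega)
  · obtain ⟨G, hG, h_edges⟩ := exists_cliqueFree_three_edgeCount_eq V
    exact ⟨G, not_contains_book_of_cliqueFree hG r, h_edges⟩

/-- Corollary 1.11 (i): `ex(n, B_{r+1}) = ⌊n²/4⌋` for `n ≥ 13r/2`. -/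
theorem stmt6 (r n : ℕ) (hr : 1 ≤ r) (hn : 13 * r ≤ 2 * n) :
    (∀ G : SimpleGraph (Fin n), ¬ Contains G (book (r + 1)) → edgeCount G ≤ n ^ 2 / 4) ∧
    (∃ G : SimpleGraph (Fin n), ¬ Contains G (book (r + 1)) ∧ edgeCount G = n ^ 2 / 4) := by
  simpa only [Fintype.card_fin] using
    stmt6_general (V := Fin n) r (by rw [Fintype.card_fin]; omega)
end

section
/- Let H be any graph and let n ≥ k ≥ 1 be integers. Suppose that the Turán graph T_{n,k} is H-free and that every H-free graph G on n vertices satisfies ρ(G) ≤ ρ(T_{n,k}) (i.e., T_{n,k} is extremal with respect to the maximum spectral radius among H-free graphs of order n). Then every H-free graph G on n vertices satisfies e(G) ≤ e(T_{n,k}); in other words, ex(n,H) = e(T_{n,k}). -/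
open SimpleGraph Finset

attribute [local instance] Classical.propDecidable

/-!
Let `e` and `Δ` be the number of edges and the maximum degree of a Turán graph `T` of order `n`.
Nonadjacent vertices of `T` have the same degree, so the degrees of the neighbours of `v` sum to
`2e - (n - d(v)) d(v)`, and each degree is `Δ` or `Δ - 1`. The Collatz–Wielandt bound with the
positive vector `x v = n + 1 - Δ + d(v)` then gives `ρ(T) ≤ (2e + Δ) / (n + 1)`. As
`n Δ ≤ 2e + n`, it follows that `n ρ(T) < 2e + 1`. For every graph `G` of order `n`, testing the
Rayleigh quotient on the all-ones vector gives `2 e(G) ≤ n ρ(G)`. Hence `ρ(G) ≤ ρ(T)` forces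
`2 e(G) < 2e + 1`.
-/

section Spectrum

variable {ι : Type*} [Fintype ι] [DecidableEq ι] {A : Matrix ι ι ℝ}

theorem abs_le_of_mem_spectrum_of_mulVec_le_smul (hA : ∀ i j, 0 ≤ A i j) {x : ι → ℝ}
    (hx : ∀ i, 0 < x i) {l μ : ℝ} (hAx : A.mulVec x ≤ l • x) (hμ : μ ∈ spectrum ℝ A) :
    |μ| ≤ l := by
  rw [← Matrix.spectrum_toLin', ← Module.End.hasEigenvalue_iff_mem_spectrum] at hμ
  obtain ⟨y, hy⟩ := hμ.exists_hasEigenvector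
  have hAy (i : ι) : ∑ j, A i j * y j = μ * y i := congrFun hy.apply_eq_smul i
  obtain ⟨i₀, hi₀⟩ := Function.ne_iff.mp hy.2
  obtain ⟨i, -, hi⟩ := exists_max_image univ (fun i ↦ |y i| / x i) ⟨i₀, mem_univ _⟩
  set M := |y i| / x i
  have hM : 0 < M := (div_pos (abs_pos.mpr hi₀) (hx i₀)).trans_le (hi i₀ (mem_univ _))
  have hyM (j : ι) : |y j| ≤ M * x j := (div_le_iff₀ (hx j)).mp (hi j (mem_univ _))
  have hyi : |y i| = M * x i := (div_mul_cancel₀ _ (hx i).ne').symm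
  have h : |μ| * (M * x i) ≤ l * (M * x i) :=
    calc |μ| * (M * x i) = |∑ j, A i j * y j| := by rw [hAy, abs_mul, hyi]
      _ ≤ ∑ j, A i j * |y j| := (abs_sum_le_sum_abs _ _).trans_eq <|
        sum_congr rfl fun j _ ↦ by rw [abs_mul, abs_of_nonneg (hA i j)]
      _ ≤ ∑ j, A i j * (M * x j) :=
        sum_le_sum fun j _ ↦ mul_le_mul_of_nonneg_left (hyM j) (hA i j)
      _ = M * A.mulVec x i := by
        simp only [Matrix.mulVec, dotProduct, mul_sum, mul_left_comm]
      _ ≤ M * (l * x i) := mul_le_mul_of_nonneg_left (hAx i) hM.le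
      _ = l * (M * x i) := mul_left_comm _ _ _
  exact le_of_mul_le_mul_right h (mul_pos hM (hx i))

theorem dotProduct_mulVec_le_sSup_spectrum_mul (hA : A.IsHermitian) (x : ι → ℝ) :
    x ⬝ᵥ A.mulVec x ≤ sSup (spectrum ℝ A) * (x ⬝ᵥ x) := by
  set ρ := sSup (spectrum ℝ A)
  have hρ : (algebraMap ℝ (Matrix ι ι ℝ) ρ - A).PosSemidef := by
    refine Matrix.posSemidef_iff_isHermitian_and_spectrum_nonneg.mpr
      ⟨.sub (by simp [Matrix.algebraMap_eq_diagonal]) hA, ?_⟩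
    rw [← spectrum.singleton_sub_eq, Set.singleton_sub]
    rintro _ ⟨μ, hμ, rfl⟩
    exact sub_nonneg.mpr (le_csSup Matrix.finite_real_spectrum.bddAbove hμ)
  have h := hρ.dotProduct_mulVec_nonneg x
  rwa [Algebra.algebraMap_eq_smul_one, Matrix.sub_mulVec, Matrix.smul_mulVec, Matrix.one_mulVec,
    star_trivial, dotProduct_sub, dotProduct_smul, smul_eq_mul, sub_nonneg] at h

end Spectrum

section Degree

variable {V : Type*} [Fintype V] {G : SimpleGraph V}

theorem sum_degree_eq_two_mul_edgeCount (G : SimpleGraph V) :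
    ∑ v, G.degree v = 2 * edgeCount G := by
  rw [G.sum_degrees_eq_twice_card_edges, edgeCount, ← coe_edgeFinset, Set.ncard_coe_finset]

theorem sum_degree_neighborFinset (hadj : ∀ u v, ¬ G.Adj u v → G.degree u = G.degree v) (v : V) :
    ∑ w ∈ G.neighborFinset v, (G.degree w : ℝ) =
      2 * edgeCount G - (Fintype.card V - G.degree v) * G.degree v := by
  have hcompl : ∑ w ∈ (G.neighborFinset v)ᶜ, (G.degree w : ℝ) =
      (Fintype.card V - G.degree v) * G.degree v := by
    have hconst : ∀ w ∈ (G.neighborFinset v)ᶜ, (G.degree w : ℝ) = G.degree v := fun w hw ↦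
      congrArg Nat.cast (hadj v w (by simpa using hw)).symm
    rw [sum_eq_card_nsmul hconst, nsmul_eq_mul, card_compl, card_neighborFinset_eq_degree,
      Nat.cast_sub (G.degree_lt_card_verts v).le]
  have htotal : ∑ w, (G.degree w : ℝ) = 2 * edgeCount G :=
    mod_cast sum_degree_eq_two_mul_edgeCount G
  rw [← hcompl, ← htotal, eq_sub_iff_add_eq, sum_add_sum_compl]

theorem card_mul_maxDegree_le_two_mul_edgeCount_add_card
    (hdeg : ∀ v, G.maxDegree ≤ G.degree v + 1) :
    Fintype.card V * G.maxDegree ≤ 2 * edgeCount G + Fintype.card V :=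
  calc Fintype.card V * G.maxDegree = ∑ _v : V, G.maxDegree := by simp
    _ ≤ ∑ v, (G.degree v + 1) := sum_le_sum fun v _ ↦ hdeg v
    _ = 2 * edgeCount G + Fintype.card V := by
      simp [sum_add_distrib, sum_degree_eq_two_mul_edgeCount]

theorem two_mul_edgeCount_le_card_mul_maxDegree (G : SimpleGraph V) :
    2 * edgeCount G ≤ Fintype.card V * G.maxDegree := by
  rw [← sum_degree_eq_two_mul_edgeCount]
  exact sum_le_card_nsmul _ _ _ fun v _ ↦ G.degree_le_maxDegree v

theorem maxDegree_le_degree_add_one_of_isTuranMaximal {r : ℕ} (hG : G.IsTuranMaximal r) (v : V) :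
    G.maxDegree ≤ G.degree v + 1 := by
  refine G.maxDegree_le_of_forall_degree_le _ fun u ↦ ?_
  have hpart := hG.isEquipartition (hG.finpartition.part_mem.2 (mem_univ v))
    (hG.finpartition.part_mem.2 (mem_univ u))
  rw [hG.degree_eq_card_sub_part_card, hG.degree_eq_card_sub_part_card]
  omega

end Degree

section SpectralRadius

variable {n : ℕ} {G : SimpleGraph (Fin n)}

theorem adjSpectralRadius_le_of_sum_neighborFinset_le {x : Fin n → ℝ} (hx : ∀ v, 0 < x v) {l : ℝ}
    (hl : 0 ≤ l) (h : ∀ v, ∑ w ∈ G.neighborFinset v, x w ≤ l * x v) :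
    adjSpectralRadius G ≤ l := by
  refine Real.sSup_le (fun μ hμ ↦ ?_) hl
  have hnonneg (v w : Fin n) : 0 ≤ G.adjMatrix ℝ v w := by
    rw [adjMatrix_apply]
    positivity
  have hAx : (G.adjMatrix ℝ).mulVec x ≤ l • x := fun v ↦
    (G.adjMatrix_mulVec_apply v x).trans_le (h v)
  exact (le_abs_self μ).trans (abs_le_of_mem_spectrum_of_mulVec_le_smul hnonneg hx hAx hμ)

theorem two_mul_edgeCount_le_mul_adjSpectralRadius (G : SimpleGraph (Fin n)) :
    2 * (edgeCount G : ℝ) ≤ n * adjSpectralRadius G := by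
  have hones : (fun _ ↦ 1) ⬝ᵥ (G.adjMatrix ℝ).mulVec (fun _ ↦ 1) = 2 * (edgeCount G : ℝ) := by
    simp only [dotProduct, adjMatrix_mulVec_apply, sum_const, card_neighborFinset_eq_degree,
      nsmul_eq_mul, mul_one, one_mul]
    exact_mod_cast sum_degree_eq_two_mul_edgeCount G
  have h := dotProduct_mulVec_le_sSup_spectrum_mul (G.isHermitian_adjMatrix ℝ) (fun _ ↦ 1)
  rw [hones] at h
  simpa [adjSpectralRadius, dotProduct, mul_comm] using h

theorem adjSpectralRadius_le_div (hadj : ∀ u v, ¬ G.Adj u v → G.degree u = G.degree v)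
    (hdeg : ∀ v, G.maxDegree ≤ G.degree v + 1) :
    adjSpectralRadius G ≤ (2 * edgeCount G + G.maxDegree) / (n + 1) := by
  have hedges : 2 * (edgeCount G : ℝ) ≤ n * G.maxDegree := by
    exact_mod_cast Fintype.card_fin n ▸ two_mul_edgeCount_le_card_mul_maxDegree G
  -- The constant term is chosen to give equality at the vertices of maximum degree; at the others
  -- the inequality reduces to `hedges`.
  refine adjSpectralRadius_le_of_sum_neighborFinset_le
    (x := fun v ↦ n + 1 - G.maxDegree + G.degree v) (fun v ↦ ?_) (by positivity) fun v ↦ ?_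
  · have hn : (0 : ℝ) < n := mod_cast v.pos
    have hv : (G.maxDegree : ℝ) ≤ G.degree v + 1 := mod_cast hdeg v
    linarith
  rw [sum_add_distrib, sum_const, card_neighborFinset_eq_degree, nsmul_eq_mul,
    sum_degree_neighborFinset hadj, Fintype.card_fin, div_mul_eq_mul_div,
    le_div_iff₀ (by positivity)]
  obtain hv | hv : G.maxDegree = G.degree v ∨ G.maxDegree = G.degree v + 1 := by
    have := G.degree_le_maxDegree v
    have := hdeg v
    omega
  · rw [hv]
    apply le_of_eq
    ring
  · have hv' : (G.degree v : ℝ) = G.maxDegree - 1 := by simp [hv]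
    rw [hv']
    linarith only [hedges]

theorem mul_adjSpectralRadius_lt_of_isTuranMaximal {r : ℕ} (hG : G.IsTuranMaximal r) :
    n * adjSpectralRadius G < 2 * edgeCount G + 1 := by
  have hdeg := maxDegree_le_degree_add_one_of_isTuranMaximal hG
  have hρ := adjSpectralRadius_le_div (fun _ _ ↦ hG.degree_eq_of_not_adj) hdeg
  have hmax : (n : ℝ) * G.maxDegree ≤ 2 * edgeCount G + n := by
    exact_mod_cast Fintype.card_fin n ▸ card_mul_maxDegree_le_two_mul_edgeCount_add_card hdeg
  calc n * adjSpectralRadius G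
      ≤ n * ((2 * edgeCount G + G.maxDegree) / (n + 1)) :=
        mul_le_mul_of_nonneg_left hρ n.cast_nonneg
    _ = (n * (2 * edgeCount G) + n * G.maxDegree) / (n + 1) := by ring
    _ < 2 * edgeCount G + 1 := by
        rw [div_lt_iff₀ (by positivity)]
        linarith

end SpectralRadius

theorem stmt11_general {n k : ℕ} (hk : 0 < k) {G : SimpleGraph (Fin n)}
    (hG : adjSpectralRadius G ≤ adjSpectralRadius (turanGraph n k)) :
    edgeCount G ≤ edgeCount (turanGraph n k) := by
  have hT : n * adjSpectralRadius (turanGraph n k) < 2 * edgeCount (turanGraph n k) + 1 :=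
    mul_adjSpectralRadius_lt_of_isTuranMaximal (r := k) (by convert isTuranMaximal_turanGraph hk)
  have h : 2 * (edgeCount G : ℝ) < 2 * edgeCount (turanGraph n k) + 1 :=
    calc 2 * (edgeCount G : ℝ) ≤ n * adjSpectralRadius G :=
          two_mul_edgeCount_le_mul_adjSpectralRadius G
      _ ≤ n * adjSpectralRadius (turanGraph n k) := mul_le_mul_of_nonneg_left hG n.cast_nonneg
      _ < 2 * edgeCount (turanGraph n k) + 1 := hT
  norm_cast at h
  omega

/-- Fact 1.3: if `T_{n,k}` is `H`-free and spectrally extremal among `H`-free graphs of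
order `n`, then it is also extremal for the number of edges: `ex(n,H) = e(T_{n,k})`. -/
theorem stmt11 {V : Type*} (H : SimpleGraph V) (n k : ℕ) (hk : 1 ≤ k) (hn : k ≤ n)
    (hTfree : ¬ Contains (turanGraph n k) H)
    (hext : ∀ G : SimpleGraph (Fin n), ¬ Contains G H →
      adjSpectralRadius G ≤ adjSpectralRadius (turanGraph n k)) :
    ∀ G : SimpleGraph (Fin n), ¬ Contains G H →
      edgeCount G ≤ edgeCount (turanGraph n k) :=
  fun _ hG ↦ stmt11_general hk (hext _ hG)
end
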